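/- Boundary growth lemma in cubes. For every integer n ≥ 2, reals 0 < λ ≤ Λ, exponents q > n and p with n ≤ p ≤ q, d₀ ∈ (0,1/4], K > 0, and every ν > 0, there exist constants k > 0 and a > 0 such that the following holds. Let b, f : Q₂ → ℝ be continuous with b ≥ 0, f ≥ 0, ‖b‖_{L^q(Q₂)} ≤ K and ‖f‖_{L^{p,q}(Q₂)} ≤ a, and let u be a C² function on Q₂ with u ≥ 0 and L⁻[u] ≤ f in Q₂. If |{x ∈ Q₁ : u(x) > x_n}| ≥ ν, then u(x) > k·x_n for all x ∈ Q₁. -/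

import Mathlib

open MeasureTheory
open scoped ENNReal

/-- The Pucci minimal extremal operator `𝓜⁻(M)` with ellipticity constants `lam ≤ Lam`:
the infimum of `tr(A*M)` over symmetric matrices `A` with `lam•I ≤ A ≤ Lam•I`. -/
noncomputable def pucciMinus (n : ℕ) (lam Lam : ℝ) (M : Matrix (Fin n) (Fin n) ℝ) : ℝ :=
  sInf { t : ℝ | ∃ A : Matrix (Fin n) (Fin n) ℝ, A.IsSymm ∧
    (A - lam • (1 : Matrix (Fin n) (Fin n) ℝ)).PosSemidef ∧
    (Lam • (1 : Matrix (Fin n) (Fin n) ℝ) - A).PosSemidef ∧ t = (A * M).trace }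

/-- The Pucci maximal extremal operator `𝓜⁺(M)`. -/
noncomputable def pucciPlus (n : ℕ) (lam Lam : ℝ) (M : Matrix (Fin n) (Fin n) ℝ) : ℝ :=
  sSup { t : ℝ | ∃ A : Matrix (Fin n) (Fin n) ℝ, A.IsSymm ∧
    (A - lam • (1 : Matrix (Fin n) (Fin n) ℝ)).PosSemidef ∧
    (Lam • (1 : Matrix (Fin n) (Fin n) ℝ) - A).PosSemidef ∧ t = (A * M).trace }

/-- The Hessian matrix `D²u(x)` of `u` at `x`. -/
noncomputable def hess (n : ℕ) (u : EuclideanSpace ℝ (Fin n) → ℝ)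
    (x : EuclideanSpace ℝ (Fin n)) : Matrix (Fin n) (Fin n) ℝ :=
  fun i j => fderiv ℝ (fun y => fderiv ℝ u y (EuclideanSpace.single j (1 : ℝ))) x
    (EuclideanSpace.single i (1 : ℝ))

/-- The euclidean norm `|Du(x)|` of the gradient of `u` at `x`. -/
noncomputable def gradNorm (n : ℕ) (u : EuclideanSpace ℝ (Fin n) → ℝ)
    (x : EuclideanSpace ℝ (Fin n)) : ℝ := ‖fderiv ℝ u x‖

/-- The `L^p` norm `(∫_E |g|^p)^(1/p)`, as a Lebesgue integral valued in `[0,∞]`. -/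
noncomputable def LpNormE (n : ℕ) (p : ℝ) (g : EuclideanSpace ℝ (Fin n) → ℝ)
    (E : Set (EuclideanSpace ℝ (Fin n))) : ℝ≥0∞ :=
  (∫⁻ x in E, ENNReal.ofReal (|g x| ^ p)) ^ (1 / p)

/-- The last (`n`-th) coordinate `x_n` of a point of `ℝⁿ`. -/
def lastC (n : ℕ) (hn : 1 ≤ n) (x : EuclideanSpace ℝ (Fin n)) : ℝ := x ⟨n - 1, by omega⟩

/-- The open half-ball `B_R⁺ = {|x| < R, x_n > 0}`. -/
def halfBall (n : ℕ) (hn : 1 ≤ n) (R : ℝ) : Set (EuclideanSpace ℝ (Fin n)) :=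
  {x | ‖x‖ < R ∧ 0 < lastC n hn x}

/-- The flat boundary part `B_R⁰ = {|x| ≤ R, x_n = 0}`. -/
def flatB (n : ℕ) (hn : 1 ≤ n) (R : ℝ) : Set (EuclideanSpace ℝ (Fin n)) :=
  {x | ‖x‖ ≤ R ∧ lastC n hn x = 0}

/-- The norm `‖g‖_{L^{p,q}(B_R⁺)} = ‖g‖_{L^p(B_R⁺)} + ‖g‖_{L^q(B_R⁺ ∩ {x_n < d0})}`. -/
noncomputable def LpqNormHB (n : ℕ) (hn : 1 ≤ n) (p q d0 R : ℝ)
    (g : EuclideanSpace ℝ (Fin n) → ℝ) : ℝ≥0∞ :=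
  LpNormE n p g (halfBall n hn R) +
    LpNormE n q g {x ∈ halfBall n hn R | lastC n hn x < d0}

/-- The open cube `Q_ρ` of side `ρ` centered at `(0,…,0,ρ/2)`. -/
def cubeQ (n : ℕ) (hn : 1 ≤ n) (ρ : ℝ) : Set (EuclideanSpace ℝ (Fin n)) :=
  {x | (∀ i : Fin n, i.1 ≠ n - 1 → |x i| < ρ / 2) ∧ 0 < lastC n hn x ∧ lastC n hn x < ρ}

/-- The norm `‖g‖_{L^{p,q}(Q₂)} = ‖g‖_{L^p(Q₂)} + ‖g‖_{L^q(Q₂ ∩ {x_n < d0})}`. -/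
noncomputable def LpqNormQ (n : ℕ) (hn : 1 ≤ n) (p q d0 : ℝ)
    (g : EuclideanSpace ℝ (Fin n) → ℝ) : ℝ≥0∞ :=
  LpNormE n p g (cubeQ n hn 2) +
    LpNormE n q g {x ∈ cubeQ n hn 2 | lastC n hn x < d0}

/-!
The Alexandrov–Bakelman–Pucci estimate bounds the measure of the slopes of a convex contact set by
the integral of `det D²u`, which the equation controls by the `Lⁿ` norms of `b` and `f`. Applied to
`u` minus a Gaussian barrier it shows that a supersolution which is small at one point of a ball is
small on a fixed fraction of that ball; a Vitali covering then makes the measure of `{u > m}`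
decay geometrically as `m` grows, so a nonnegative supersolution that is not small in measure has a
positive lower bound on compact sets.

At the flat boundary this bound, holding at height `≥ ε r`, has to be turned into linear growth. A
quadratic barrier improves `u ≥ k (x_n - ε r)` on the half-ball of radius `r` to the same
inequality on the half-ball of radius `r / 2`, with `ε` multiplied by a factor `θ < 1` and a
slightly smaller `k`. Since `q > n`, the scaled norms of `b` and `f` decay geometrically along
dyadic radii, so the total loss in `k` converges and `u ≥ (k / 4) x_n` survives in the limit.
-/

local notation "𝔼" n:max => EuclideanSpace ℝ (Fin n)

section EllipticMatrices

variable {n : ℕ} {lam Lam : ℝ} {A : Matrix (Fin n) (Fin n) ℝ}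

open scoped MatrixOrder Matrix.Norms.L2Operator in
lemma trace_mul_nonneg_of_posSemidef {ι : Type*} [Fintype ι] {A B : Matrix ι ι ℝ}
    (hA : A.PosSemidef) (hB : B.PosSemidef) : 0 ≤ (A * B).trace := by
  classical
  obtain ⟨C, rfl⟩ := CStarAlgebra.nonneg_iff_eq_star_mul_self.mp hB.nonneg
  rw [Matrix.star_eq_conjTranspose, ← Matrix.mul_assoc, Matrix.trace_mul_comm, ← Matrix.mul_assoc]
  exact (hA.mul_mul_conjTranspose_same C).trace_nonneg

lemma abs_det_le_trace_pow {ι : Type*} [Fintype ι] [DecidableEq ι] {A : Matrix ι ι ℝ}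
    (hA : A.PosSemidef) : |A.det| ≤ A.trace ^ Fintype.card ι := by
  have hev := hA.eigenvalues_nonneg
  rw [hA.isHermitian.det_eq_prod_eigenvalues, hA.isHermitian.trace_eq_sum_eigenvalues,
    ← Finset.card_univ, ← Finset.prod_const]
  simp only [RCLike.ofReal_real_eq_id, id]
  rw [abs_of_nonneg (Finset.prod_nonneg fun i _ => hev i)]
  exact Finset.prod_le_prod (fun i _ => hev i) fun i hi =>
    Finset.single_le_sum (fun j _ => hev j) hi

/-- `A` is an admissible coefficient matrix for the Pucci operators: it is symmetric and
`lam • 1 ≤ A ≤ Lam • 1`. -/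
structure IsElliptic (lam Lam : ℝ) (A : Matrix (Fin n) (Fin n) ℝ) : Prop where
  isSymm : A.IsSymm
  posSemidef_sub_smul_one : (A - lam • (1 : Matrix (Fin n) (Fin n) ℝ)).PosSemidef
  posSemidef_smul_one_sub : (Lam • (1 : Matrix (Fin n) (Fin n) ℝ) - A).PosSemidef

namespace IsElliptic

lemma trace_le (hA : IsElliptic lam Lam A) : A.trace ≤ n * Lam := by
  have h := hA.posSemidef_smul_one_sub.trace_nonneg
  rw [Matrix.trace_sub, Matrix.trace_smul, Matrix.trace_one, Fintype.card_fin, smul_eq_mul] at h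
  linarith

lemma mul_dotProduct_self_le (hA : IsElliptic lam Lam A) (v : Fin n → ℝ) :
    lam * (v ⬝ᵥ v) ≤ v ⬝ᵥ A.mulVec v := by
  have h := hA.posSemidef_sub_smul_one.dotProduct_mulVec_nonneg v
  rw [Matrix.sub_mulVec, dotProduct_sub, Matrix.smul_mulVec, Matrix.one_mulVec, dotProduct_smul,
    star_trivial, smul_eq_mul] at h
  linarith

lemma le_trace_mul (hA : IsElliptic lam Lam A) {a b : ℝ} (ha : 0 ≤ a) (hb : 0 ≤ b)
    (v : Fin n → ℝ) :
    b * lam * (v ⬝ᵥ v) - a * (n * Lam) ≤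
      (A * (b • Matrix.vecMulVec v v - a • (1 : Matrix (Fin n) (Fin n) ℝ))).trace := by
  have htr : (A * (b • Matrix.vecMulVec v v - a • (1 : Matrix (Fin n) (Fin n) ℝ))).trace =
      b * (v ⬝ᵥ A.mulVec v) - a * A.trace := by
    rw [Matrix.mul_sub, Matrix.trace_sub, Matrix.mul_smul, Matrix.mul_smul, Matrix.trace_smul,
      Matrix.trace_smul, Matrix.mul_one, Matrix.mul_vecMulVec, Matrix.trace_vecMulVec,
      dotProduct_comm, smul_eq_mul, smul_eq_mul]
  rw [htr, mul_assoc]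
  have hquad := mul_le_mul_of_nonneg_left (hA.mul_dotProduct_self_le v) hb
  have htrace := mul_le_mul_of_nonneg_left hA.trace_le ha
  linarith

end IsElliptic

lemma mul_trace_add_le_pucciMinus (hLam : lam ≤ Lam) {M N : Matrix (Fin n) (Fin n) ℝ} {c : ℝ}
    (hMN : (M - N).PosSemidef) (hc : ∀ A, IsElliptic lam Lam A → c ≤ (A * N).trace) :
    lam * (M - N).trace + c ≤ pucciMinus n lam Lam M := by
  refine le_csInf ⟨_, lam • 1, by simp [Matrix.IsSymm], ?_, ?_, rfl⟩ ?_
  · simpa only [sub_self] using Matrix.PosSemidef.zero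
  · rw [← sub_smul]
    exact Matrix.PosSemidef.one.smul (sub_nonneg.2 hLam)
  rintro _ ⟨A, hsymm, hlower, hupper, rfl⟩
  have hsplit : (A * M).trace = ((A - lam • (1 : Matrix (Fin n) (Fin n) ℝ)) * (M - N)).trace +
      lam * (M - N).trace + (A * N).trace := by
    simp only [Matrix.sub_mul, Matrix.mul_sub, Matrix.trace_sub, Matrix.smul_mul, Matrix.one_mul,
      Matrix.trace_smul, smul_eq_mul]
    ring
  linarith [hc A ⟨hsymm, hlower, hupper⟩, trace_mul_nonneg_of_posSemidef hlower hMN]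

end EllipticMatrices

section Hessian


variable {n : ℕ} {w ψ : 𝔼 n → ℝ} {x : 𝔼 n}

lemma differentiableAt_fderiv_of_contDiffAt (hw : ContDiffAt ℝ 2 w x) :
    DifferentiableAt ℝ (fderiv ℝ w) x :=
  (hw.fderiv_right (m := 1) (by norm_num)).differentiableAt one_ne_zero

lemma hess_apply (hw : DifferentiableAt ℝ (fderiv ℝ w) x) (i j : Fin n) :
    hess n w x i j =
      fderiv ℝ (fderiv ℝ w) x (EuclideanSpace.single i 1) (EuclideanSpace.single j 1) := by
  rw [hess, fderiv_clm_apply hw (differentiableAt_const _)]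
  simp

lemma dotProduct_hess_mulVec (hw : DifferentiableAt ℝ (fderiv ℝ w) x) (v : 𝔼 n) :
    v.ofLp ⬝ᵥ (hess n w x).mulVec v.ofLp = fderiv ℝ (fderiv ℝ w) x v v := by
  have hv : v = ∑ i, v i • EuclideanSpace.single i (1 : ℝ) := by
    ext j
    simp [Finset.sum_apply, Pi.single_apply]
  conv_rhs => rw [hv]
  simp only [map_sum, map_smul, _root_.sum_apply, _root_.smul_apply, dotProduct, Matrix.mulVec,
    Finset.mul_sum, hess_apply hw, smul_eq_mul]
  rw [Finset.sum_comm]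
  exact Finset.sum_congr rfl fun i _ => Finset.sum_congr rfl fun j _ => by ring

lemma isHermitian_hess (hw : ContDiffAt ℝ 2 w x) : (hess n w x).IsHermitian := by
  have hD := differentiableAt_fderiv_of_contDiffAt hw
  ext i j
  rw [Matrix.conjTranspose_apply, star_trivial, hess_apply hD, hess_apply hD]
  exact hw.isSymmSndFDerivAt (by simp) _ _

lemma hess_sub (hw : ContDiffAt ℝ 2 w x) (hψ : ContDiffAt ℝ 2 ψ x) :
    hess n (fun y => w y - ψ y) x = hess n w x - hess n ψ x := by
  have hDw := differentiableAt_fderiv_of_contDiffAt hw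
  have hDψ := differentiableAt_fderiv_of_contDiffAt hψ
  have hfderiv : fderiv ℝ (fun y => w y - ψ y) =ᶠ[nhds x] fun y => fderiv ℝ w y - fderiv ℝ ψ y := by
    filter_upwards [hw.eventually (by norm_num), hψ.eventually (by norm_num)] with y hwy hψy
    exact fderiv_fun_sub (hwy.differentiableAt two_ne_zero) (hψy.differentiableAt two_ne_zero)
  ext i j
  rw [Matrix.sub_apply, hess_apply (differentiableAt_fderiv_of_contDiffAt (hw.sub hψ)),
    hess_apply hDw, hess_apply hDψ, hfderiv.fderiv_eq, fderiv_fun_sub hDw hDψ]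
  rfl

lemma hess_apply_of_hasGradientAt {G : 𝔼 n → 𝔼 n} {D : 𝔼 n →L[ℝ] 𝔼 n}
    (hG : ∀ᶠ y in nhds x, HasGradientAt ψ (G y) y) (hD : HasFDerivAt G D x) (i j : Fin n) :
    hess n ψ x i j = D (EuclideanSpace.single i 1) j := by
  have hpartial : (fun y => fderiv ℝ ψ y (EuclideanSpace.single j 1)) =ᶠ[nhds x]
      fun y => G y j := by
    filter_upwards [hG] with y hy
    rw [hy.hasFDerivAt.fderiv, InnerProductSpace.toDual_apply_apply,
      EuclideanSpace.inner_single_right]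
    simp
  have hcoord : HasFDerivAt (fun y => G y j) _ x :=
    (EuclideanSpace.proj (𝕜 := ℝ) j).hasFDerivAt.comp x hD
  rw [hess, hpartial.fderiv_eq, hcoord.fderiv]
  rfl

lemma hasFDerivAt_gradient (hw : ContDiffAt ℝ 2 w x) :
    HasFDerivAt (gradient w) (Matrix.toEuclideanCLM (𝕜 := ℝ) (hess n w x)) x := by
  have hgrad : ∀ᶠ y in nhds x, HasGradientAt w (gradient w y) y := by
    filter_upwards [hw.eventually (by norm_num)] with y hy
    exact (hy.differentiableAt two_ne_zero).hasGradientAt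
  have hdiff : DifferentiableAt ℝ (gradient w) x := by
    rw [differentiableAt_euclidean]
    intro j
    have hpartial : (fun y => gradient w y j) =
        fun y => fderiv ℝ w y (EuclideanSpace.single j (1 : ℝ)) := by
      ext y
      rw [← inner_gradient_left, EuclideanSpace.inner_single_right]
      simp
    rw [hpartial]
    exact (differentiableAt_fderiv_of_contDiffAt hw).clm_apply (differentiableAt_const _)
  convert hdiff.hasFDerivAt
  refine ContinuousLinearMap.coe_injective <|
    (EuclideanSpace.basisFun (Fin n) ℝ).toBasis.ext fun i => ?_
  ext j
  have hentry := hess_apply_of_hasGradientAt hgrad hdiff.hasFDerivAt i j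
  rw [← (isHermitian_hess hw).apply i j, star_trivial] at hentry
  simpa [Matrix.ofLp_toEuclideanCLM] using hentry

lemma deriv_deriv_nonneg_of_isLocalMin {φ : ℝ → ℝ} {t : ℝ} (hmin : IsLocalMin φ t)
    (hφ : ContinuousAt φ t) : 0 ≤ deriv (deriv φ) t := by
  by_contra! hneg
  have hmax := isLocalMax_of_deriv_deriv_neg hneg hmin.deriv_eq_zero hφ
  have hconst : φ =ᶠ[nhds t] fun _ => φ t := by
    filter_upwards [hmin, hmax] with s hge hle using le_antisymm hle hge
  have hderiv : deriv φ =ᶠ[nhds t] fun _ => 0 := by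
    simpa only [deriv_const'] using hconst.deriv
  rw [hderiv.deriv_eq, deriv_const] at hneg
  exact hneg.false

lemma deriv_deriv_comp_line (hw : ContDiffAt ℝ 2 w x) (v : 𝔼 n) :
    deriv (deriv fun t : ℝ => w (x + t • v)) 0 = fderiv ℝ (fderiv ℝ w) x v v := by
  have hline (t : ℝ) : HasDerivAt (fun t : ℝ => x + t • v) v t := by
    simpa using ((hasDerivAt_id t).smul_const v).const_add x
  have htendsto : Filter.Tendsto (fun t : ℝ => x + t • v) (nhds 0) (nhds x) :=
    Continuous.tendsto' (by fun_prop) _ _ (by simp)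
  have hfirst : deriv (fun t : ℝ => w (x + t • v)) =ᶠ[nhds 0]
      fun t => fderiv ℝ w (x + t • v) v := by
    filter_upwards [htendsto.eventually (hw.eventually (by norm_num))] with t ht
    exact ((ht.differentiableAt two_ne_zero).hasFDerivAt.comp_hasDerivAt t (hline t)).deriv
  have hsecond : HasFDerivAt (fderiv ℝ w) (fderiv ℝ (fderiv ℝ w) x) (x + (0 : ℝ) • v) := by
    simpa using (differentiableAt_fderiv_of_contDiffAt hw).hasFDerivAt
  rw [hfirst.deriv_eq]
  have hcomp := hsecond.comp_hasDerivAt (0 : ℝ) (hline 0)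
  simpa using (hcomp.clm_apply (hasDerivAt_const (0 : ℝ) v)).deriv

lemma posSemidef_hess_of_isLocalMin (hw : ContDiffAt ℝ 2 w x) (hmin : IsLocalMin w x) :
    (hess n w x).PosSemidef := by
  refine .of_dotProduct_mulVec_nonneg (isHermitian_hess hw) fun v => ?_
  let γ : ℝ → 𝔼 n := fun t => x + t • WithLp.toLp 2 v
  have hγ : ContinuousAt γ 0 := by fun_prop
  have hγ_zero : γ 0 = x := by simp [γ]
  have hquad := dotProduct_hess_mulVec (differentiableAt_fderiv_of_contDiffAt hw) (WithLp.toLp 2 v)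
  rw [star_trivial, hquad, ← deriv_deriv_comp_line hw]
  refine deriv_deriv_nonneg_of_isLocalMin (φ := w ∘ γ) ?_ ?_
  · exact IsLocalMin.comp_continuous (hγ_zero.symm ▸ hmin) hγ
  · exact ContinuousAt.comp (hγ_zero.symm ▸ hw.continuousAt) hγ

end Hessian

section ContactSet

/-- The points of `K` where `w` is negative, has gradient of norm at most `ρ`, and is touched from
below by its tangent plane over all of `K`. -/
def lowerContactSet {E : Type*} [NormedAddCommGroup E] [NormedSpace ℝ E] (w : E → ℝ) (K : Set E)
    (ρ : ℝ) : Set E :=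
  {x ∈ K | w x < 0 ∧ ‖fderiv ℝ w x‖ ≤ ρ ∧ ∀ y ∈ K, w x + fderiv ℝ w x (y - x) ≤ w y}

lemma measurableSet_lowerContactSet {E : Type*} [NormedAddCommGroup E] [NormedSpace ℝ E]
    [MeasurableSpace E] [OpensMeasurableSpace E] {w : E → ℝ} {K U : Set E} (hU : IsOpen U)
    (hw : ContDiffOn ℝ 2 w U) (hK : IsClosed K) (hKU : K ⊆ U) (ρ : ℝ) :
    MeasurableSet (lowerContactSet w K ρ) := by
  have hDw : ContinuousOn (fderiv ℝ w) K :=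
    (hw.continuousOn_fderiv_of_isOpen hU (by norm_num)).mono hKU
  have hw : ContinuousOn w K := hw.continuousOn.mono hKU
  have hnorm : IsClosed (K ∩ (fun x => ‖fderiv ℝ w x‖) ⁻¹' Set.Iic ρ) :=
    hDw.norm.preimage_isClosed_of_isClosed hK isClosed_Iic
  have htangent : IsClosed
      (⋂ y ∈ K, K ∩ (fun x => w x + fderiv ℝ w x (y - x)) ⁻¹' Set.Iic (w y)) :=
    isClosed_biInter fun y _ => ContinuousOn.preimage_isClosed_of_isClosed
      (hw.add (hDw.clm_apply (continuousOn_const.sub continuousOn_id))) hK isClosed_Iic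
  have hnonneg : IsClosed (K ∩ w ⁻¹' Set.Ici 0) := hw.preimage_isClosed_of_isClosed hK isClosed_Ici
  convert (hnorm.inter htangent).measurableSet.diff hnonneg.measurableSet
  ext x
  simp only [lowerContactSet, Set.mem_ofPred_eq, Set.mem_inter_iff, Set.mem_iInter,
    Set.mem_preimage, Set.mem_Iic, Set.mem_Ici, Set.mem_sdiff]
  grind

variable {n : ℕ} {w : 𝔼 n → ℝ} {K : Set (𝔼 n)} {x : 𝔼 n} {ρ d m : ℝ}

lemma posSemidef_hess_of_mem_lowerContactSet (hw : ContDiffAt ℝ 2 w x)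
    (hx : x ∈ lowerContactSet w K ρ) (hxK : x ∈ interior K) : (hess n w x).PosSemidef := by
  have hlin : ContDiff ℝ 2 (fderiv ℝ w x) := (fderiv ℝ w x).contDiff
  have hmin : IsLocalMin (fun y => w y - fderiv ℝ w x y) x := by
    filter_upwards [mem_interior_iff_mem_nhds.1 hxK] with y hy
    have htangent := hx.2.2.2 y hy
    rw [map_sub] at htangent
    linarith
  have hhess_lin : hess n (fderiv ℝ w x) x = 0 := by
    ext i j
    rw [hess_apply (differentiableAt_fderiv_of_contDiffAt hlin.contDiffAt)]
    have hconst : fderiv ℝ (fderiv ℝ w x) = fun _ => fderiv ℝ w x :=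
      funext fun _ => ContinuousLinearMap.fderiv _
    simp [hconst]
  have hpsd := posSemidef_hess_of_isLocalMin (hw.sub hlin.contDiffAt) hmin
  rwa [hess_sub hw hlin.contDiffAt, hhess_lin, sub_zero] at hpsd

lemma ball_subset_gradient_image_lowerContactSet (hK : IsCompact K)
    (hw : ∀ x ∈ K, DifferentiableAt ℝ w x) (hd : 0 < d) (hdist : ∀ x ∈ K, ∀ y ∈ K, dist x y ≤ d)
    (hbd : ∀ x ∈ K, x ∉ interior K → 0 ≤ w x) {x₀ : 𝔼 n} (hx₀ : x₀ ∈ K)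
    (hwx₀ : w x₀ ≤ -m) :
    Metric.ball 0 (m / d) ⊆ gradient w '' lowerContactSet w K (m / d) := by
  intro p hp
  let P : 𝔼 n →L[ℝ] ℝ := InnerProductSpace.toDual ℝ (𝔼 n) p
  have hP : ‖P‖ < m / d := by simpa [P] using hp
  have hwK : ContinuousOn w K := fun x hx => (hw x hx).continuousAt.continuousWithinAt
  obtain ⟨x₁, hx₁, hmin⟩ := hK.exists_isMinOn ⟨x₀, hx₀⟩ (hwK.sub P.continuous.continuousOn)
  have hmin (y) (hy : y ∈ K) : w x₁ - P x₁ ≤ w y - P y := hmin hy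
  have hosc : P (x₁ - x₀) < m := calc
    P (x₁ - x₀) ≤ ‖P‖ * ‖x₁ - x₀‖ := (le_abs_self _).trans (P.le_opNorm _)
    _ ≤ ‖P‖ * d := by
      rw [← dist_eq_norm]
      exact mul_le_mul_of_nonneg_left (hdist _ hx₁ _ hx₀) (norm_nonneg _)
    _ < m := (lt_div_iff₀ hd).1 hP
  have hneg : w x₁ < 0 := by
    rw [map_sub] at hosc
    linarith [hmin x₀ hx₀]
  have hint : x₁ ∈ interior K := by
    by_contra hx₁int
    exact (hbd x₁ hx₁ hx₁int).not_gt hneg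
  have hfderiv : fderiv ℝ w x₁ = P := by
    have hloc : IsLocalMin (fun y => w y - P y) x₁ := by
      filter_upwards [mem_interior_iff_mem_nhds.1 hint] with y hy using hmin y hy
    have hzero := hloc.fderiv_eq_zero
    rwa [fderiv_fun_sub (hw x₁ hx₁) P.differentiableAt, P.fderiv, sub_eq_zero] at hzero
  refine ⟨x₁, ⟨hx₁, hneg, hfderiv ▸ hP.le, fun y hy => ?_⟩, by simp [gradient, hfderiv, P]⟩
  rw [hfderiv, map_sub]
  linarith [hmin y hy]

theorem volume_ball_le_lintegral_abs_det_hess {U : Set (𝔼 n)} (hU : IsOpen U)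
    (hw : ContDiffOn ℝ 2 w U) (hK : IsCompact K) (hKU : K ⊆ U) (hd : 0 < d)
    (hdist : ∀ x ∈ K, ∀ y ∈ K, dist x y ≤ d) (hbd : ∀ x ∈ K, x ∉ interior K → 0 ≤ w x)
    {x₀ : 𝔼 n} (hx₀ : x₀ ∈ K) (hwx₀ : w x₀ ≤ -m) :
    volume (Metric.ball (0 : 𝔼 n) (m / d)) ≤
      ∫⁻ x in lowerContactSet w K (m / d), ENNReal.ofReal |(hess n w x).det| := by
  have hwat (x) (hx : x ∈ K) : ContDiffAt ℝ 2 w x := hw.contDiffAt (hU.mem_nhds (hKU hx))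
  calc volume (Metric.ball (0 : 𝔼 n) (m / d))
      ≤ volume (gradient w '' lowerContactSet w K (m / d)) :=
        measure_mono (ball_subset_gradient_image_lowerContactSet hK
          (fun x hx => (hwat x hx).differentiableAt two_ne_zero) hd hdist hbd hx₀ hwx₀)
    _ ≤ ∫⁻ x in lowerContactSet w K (m / d),
          ENNReal.ofReal |(Matrix.toEuclideanCLM (𝕜 := ℝ) (hess n w x)).det| :=
        addHaar_image_le_lintegral_abs_det_fderiv volume
          (measurableSet_lowerContactSet hU hw hK.isClosed hKU _)
          fun x hx => (hasFDerivAt_gradient (hwat x hx.1)).hasFDerivWithinAt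
    _ = ∫⁻ x in lowerContactSet w K (m / d), ENNReal.ofReal |(hess n w x).det| := by
        simp only [ContinuousLinearMap.det, Matrix.coe_toEuclideanCLM_eq_toEuclideanLin,
          Matrix.toLpLin_eq_toLin, LinearMap.det_toLin]

end ContactSet

section UnitBall

/-- The `n`-th root of the volume of the unit ball of `ℝⁿ`, so that a ball of radius `r` has volume
`(unitBallRoot n * r) ^ n`. -/
noncomputable def unitBallRoot (n : ℕ) : ℝ :=
  volume.real (Metric.ball (0 : 𝔼 n) 1) ^ (n : ℝ)⁻¹

variable {n : ℕ}

lemma unitBallRoot_pos : 0 < unitBallRoot n :=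
  Real.rpow_pos_of_pos
    (ENNReal.toReal_pos (Metric.measure_ball_pos volume _ one_pos).ne' measure_ball_lt_top.ne) _

lemma volume_closedBall_eq_ofReal_unitBallRoot_pow [NeZero n] (y : 𝔼 n) {r : ℝ} (hr : 0 ≤ r) :
    volume (Metric.closedBall y r) = ENNReal.ofReal ((unitBallRoot n * r) ^ n) := by
  rw [Measure.addHaar_closedBall volume y hr, finrank_euclideanSpace, Fintype.card_fin,
    ← ofReal_measureReal measure_ball_lt_top.ne, ← ENNReal.ofReal_mul (by positivity), mul_pow,
    unitBallRoot, Real.rpow_inv_natCast_pow measureReal_nonneg (NeZero.ne n), mul_comm]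

lemma volume_real_closedBall [NeZero n] (y : 𝔼 n) {r : ℝ} (hr : 0 ≤ r) :
    volume.real (Metric.closedBall y r) = (unitBallRoot n * r) ^ n := by
  have hroot := unitBallRoot_pos (n := n)
  rw [measureReal_def, volume_closedBall_eq_ofReal_unitBallRoot_pow y hr,
    ENNReal.toReal_ofReal (by positivity)]

end UnitBall

lemma eLpNorm_natCast_pow_eq_lintegral {α ε : Type*} [MeasurableSpace α] [ENorm ε] {μ : Measure α}
    {n : ℕ} [NeZero n] (g : α → ε) : eLpNorm g n μ ^ n = ∫⁻ x, ‖g x‖ₑ ^ n ∂μ := by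
  have h := eLpNorm_nnreal_pow_eq_lintegral (μ := μ) (f := g) (p := n)
    (Nat.cast_ne_zero.2 (NeZero.ne n))
  simpa only [ENNReal.coe_natCast, NNReal.coe_natCast, ENNReal.rpow_natCast] using h

lemma eLpNorm_const_mul_add_add_indicator_le {α : Type*} [MeasurableSpace α] {μ : Measure α}
    {p : ℝ≥0∞} (hp : 1 ≤ p) {b f : α → ℝ} (hb : AEStronglyMeasurable b μ)
    (hf : AEStronglyMeasurable f μ) {c g : ℝ} (hc : 0 ≤ c) (hg : 0 ≤ g) {S : Set α}
    (hS : MeasurableSet S) :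
    eLpNorm (fun x => c * b x + f x + S.indicator (fun _ => g) x) p μ ≤
      ENNReal.ofReal c * eLpNorm b p μ + eLpNorm f p μ + ENNReal.ofReal g * μ S ^ (1 / p.toReal) :=
  calc eLpNorm (fun x => c * b x + f x + S.indicator (fun _ => g) x) p μ
      ≤ eLpNorm (c • b) p μ + eLpNorm f p μ + eLpNorm (S.indicator fun _ => g) p μ :=
        (eLpNorm_add_le ((hb.const_smul c).add hf) (aestronglyMeasurable_const.indicator hS)
          hp).trans (add_le_add_left (eLpNorm_add_le (hb.const_smul c) hf hp) _)
    _ ≤ ENNReal.ofReal c * eLpNorm b p μ + eLpNorm f p μ +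
          ENNReal.ofReal g * μ S ^ (1 / p.toReal) := by
        rw [eLpNorm_const_smul, ← Real.enorm_of_nonneg hc, ← Real.enorm_of_nonneg hg]
        gcongr
        exact eLpNorm_indicator_const_le g p

lemma ofReal_mul_unitBallRoot_mul_le_eLpNorm {n : ℕ} [NeZero n] {w : 𝔼 n → ℝ} {K U : Set (𝔼 n)}
    {d m : ℝ} (hU : IsOpen U) (hw : ContDiffOn ℝ 2 w U) (hK : IsCompact K) (hKU : K ⊆ U)
    (hd : 0 < d) (hdist : ∀ x ∈ K, ∀ y ∈ K, dist x y ≤ d)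
    (hbd : ∀ x ∈ K, x ∉ interior K → 0 ≤ w x) (hm : 0 ≤ m) {x₀ : 𝔼 n} (hx₀ : x₀ ∈ K)
    (hwx₀ : w x₀ ≤ -m) {lam : ℝ} (hlam : 0 ≤ lam) {h : 𝔼 n → ℝ}
    (hh : ∀ x ∈ lowerContactSet w K (m / d),
      (hess n w x).PosSemidef ∧ lam * (hess n w x).trace ≤ h x) :
    ENNReal.ofReal (lam * (unitBallRoot n * (m / d))) ≤
      eLpNorm h n (volume.restrict (lowerContactSet w K (m / d))) := by
  have hroot := unitBallRoot_pos (n := n)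
  have hΓ : MeasurableSet (lowerContactSet w K (m / d)) :=
    measurableSet_lowerContactSet hU hw hK.isClosed hKU _
  rw [← ENNReal.pow_le_pow_left_iff (NeZero.ne n), eLpNorm_natCast_pow_eq_lintegral]
  calc ENNReal.ofReal (lam * (unitBallRoot n * (m / d))) ^ n
      = ENNReal.ofReal (lam ^ n) * volume (Metric.ball (0 : 𝔼 n) (m / d)) := by
        rw [← Measure.addHaar_closedBall_eq_addHaar_ball,
          volume_closedBall_eq_ofReal_unitBallRoot_pow _ (by positivity),
          ← ENNReal.ofReal_mul (by positivity), ← mul_pow, ENNReal.ofReal_pow (by positivity)]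
    _ ≤ ENNReal.ofReal (lam ^ n) *
          ∫⁻ x in lowerContactSet w K (m / d), ENNReal.ofReal |(hess n w x).det| := by
        gcongr
        exact volume_ball_le_lintegral_abs_det_hess hU hw hK hKU hd hdist hbd hx₀ hwx₀
    _ = ∫⁻ x in lowerContactSet w K (m / d),
          ENNReal.ofReal (lam ^ n) * ENNReal.ofReal |(hess n w x).det| :=
        (lintegral_const_mul' _ _ ENNReal.ofReal_ne_top).symm
    _ ≤ ∫⁻ x in lowerContactSet w K (m / d), ‖h x‖ₑ ^ n := by
        refine setLIntegral_mono' hΓ fun x hx => ?_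
        obtain ⟨hpsd, htrace⟩ := hh x hx
        have hdet : |(hess n w x).det| ≤ (hess n w x).trace ^ n := by
          simpa only [Fintype.card_fin] using abs_det_le_trace_pow hpsd
        have htrace_nonneg : 0 ≤ lam * (hess n w x).trace := mul_nonneg hlam hpsd.trace_nonneg
        rw [Real.enorm_of_nonneg (htrace_nonneg.trans htrace),
          ← ENNReal.ofReal_pow (htrace_nonneg.trans htrace), ← ENNReal.ofReal_mul (by positivity)]
        refine ENNReal.ofReal_le_ofReal ?_
        calc lam ^ n * |(hess n w x).det| ≤ (lam * (hess n w x).trace) ^ n := by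
              rw [mul_pow]
              gcongr
          _ ≤ h x ^ n := by gcongr

section Supersolution

variable {n : ℕ} {lam Lam : ℝ} {U : Set (𝔼 n)} {b f u : 𝔼 n → ℝ}

/-- `u` is a nonnegative `C²` solution of `𝓜⁻(D²u) - b |Du| ≤ f` in the open set `U`, with
continuous coefficients `b, f ≥ 0`. -/
structure IsNonnegSupersolution (lam Lam : ℝ) (U : Set (𝔼 n)) (b f u : 𝔼 n → ℝ) : Prop where
  isOpen : IsOpen U
  continuousOn_drift : ContinuousOn b U
  continuousOn_rhs : ContinuousOn f U
  drift_nonneg : ∀ x ∈ U, 0 ≤ b x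
  rhs_nonneg : ∀ x ∈ U, 0 ≤ f x
  contDiffOn : ContDiffOn ℝ 2 u U
  nonneg : ∀ x ∈ U, 0 ≤ u x
  pucciMinus_sub_le : ∀ x ∈ U, pucciMinus n lam Lam (hess n u x) - b x * gradNorm n u x ≤ f x

namespace IsNonnegSupersolution

lemma mono (hu : IsNonnegSupersolution lam Lam U b f u) {V : Set (𝔼 n)} (hV : IsOpen V)
    (hVU : V ⊆ U) : IsNonnegSupersolution lam Lam V b f u where
  isOpen := hV
  continuousOn_drift := hu.continuousOn_drift.mono hVU
  continuousOn_rhs := hu.continuousOn_rhs.mono hVU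
  drift_nonneg := fun x hx => hu.drift_nonneg x (hVU hx)
  rhs_nonneg := fun x hx => hu.rhs_nonneg x (hVU hx)
  contDiffOn := hu.contDiffOn.mono hVU
  nonneg := fun x hx => hu.nonneg x (hVU hx)
  pucciMinus_sub_le := fun x hx => hu.pucciMinus_sub_le x (hVU hx)

lemma contDiffAt (hu : IsNonnegSupersolution lam Lam U b f u) {x : 𝔼 n} (hx : x ∈ U) :
    ContDiffAt ℝ 2 u x :=
  hu.contDiffOn.contDiffAt (hu.isOpen.mem_nhds hx)

lemma hess_sub_of_mem_lowerContactSet (hu : IsNonnegSupersolution lam Lam U b f u)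
    (hLam : lam ≤ Lam) {K : Set (𝔼 n)} (hKU : K ⊆ U) {ψ : 𝔼 n → ℝ} {x : 𝔼 n}
    (hψ : ContDiffAt ℝ 2 ψ x) {ρ L g : ℝ} (hx : x ∈ lowerContactSet (fun y => u y - ψ y) K ρ)
    (hxK : x ∈ interior K) (hDψ : ‖fderiv ℝ ψ x‖ ≤ L)
    (hg : ∀ A, IsElliptic lam Lam A → -g ≤ (A * hess n ψ x).trace) :
    (hess n (fun y => u y - ψ y) x).PosSemidef ∧
      lam * (hess n (fun y => u y - ψ y) x).trace ≤ (ρ + L) * b x + f x + g := by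
  have hxU := hKU hx.1
  have hux := hu.contDiffAt hxU
  have hpsd := posSemidef_hess_of_mem_lowerContactSet (hux.sub hψ) hx hxK
  refine ⟨hpsd, ?_⟩
  have hgrad : gradNorm n u x ≤ ρ + L := calc
    gradNorm n u x = ‖fderiv ℝ (fun y => u y - ψ y) x + fderiv ℝ ψ x‖ := by
      rw [fderiv_fun_sub (hux.differentiableAt two_ne_zero) (hψ.differentiableAt two_ne_zero),
        sub_add_cancel, gradNorm]
    _ ≤ ρ + L := norm_add_le_of_le hx.2.2.1 hDψ
  rw [hess_sub hux hψ] at hpsd ⊢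
  linarith [mul_trace_add_le_pucciMinus hLam hpsd hg, hu.pucciMinus_sub_le x hxU,
    mul_le_mul_of_nonneg_left hgrad (hu.drift_nonneg x hxU)]

/-- The Alexandrov–Bakelman–Pucci estimate for `u` minus a barrier `ψ`. The defect `g` of the
barrier enters only through the part of `S` on which `u ≤ ψ`. -/
theorem abp [NeZero n] (hu : IsNonnegSupersolution lam Lam U b f u) (hlam : 0 < lam)
    (hLam : lam ≤ Lam) {K : Set (𝔼 n)} (hK : IsCompact K) (hKU : K ⊆ U) {d : ℝ} (hd : 0 < d)
    (hdist : ∀ x ∈ K, ∀ y ∈ K, dist x y ≤ d) {ψ : 𝔼 n → ℝ} (hψ : ContDiff ℝ 2 ψ) {L : ℝ}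
    (hDψ : ∀ x ∈ K, ‖fderiv ℝ ψ x‖ ≤ L) {S : Set (𝔼 n)} (hS : MeasurableSet S) {g : ℝ}
    (hg : 0 ≤ g) (htrace : ∀ x ∈ K, ∀ A, IsElliptic lam Lam A →
      -S.indicator (fun _ => g) x ≤ (A * hess n ψ x).trace)
    (hbd : ∀ x ∈ K, x ∉ interior K → ψ x ≤ u x) {m : ℝ} (hm : 0 ≤ m) {x₀ : 𝔼 n} (hx₀ : x₀ ∈ K)
    (hux₀ : u x₀ + m ≤ ψ x₀) {β φ v : ℝ} (hβ : 0 ≤ β) (hφ : 0 ≤ φ) (hv : 0 ≤ v)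
    (hbβ : eLpNorm b n (volume.restrict K) ≤ ENNReal.ofReal β)
    (hfφ : eLpNorm f n (volume.restrict K) ≤ ENNReal.ofReal φ)
    (hSv : volume {x ∈ S | u x ≤ ψ x} ≤ ENNReal.ofReal (v ^ n)) :
    lam * (unitBallRoot n * (m / d)) ≤ (m / d + L) * β + φ + g * v := by
  let w : 𝔼 n → ℝ := fun y => u y - ψ y
  let Γ := lowerContactSet w K (m / d)
  have hL : 0 ≤ L := (norm_nonneg _).trans (hDψ x₀ hx₀)
  have hwU : ContDiffOn ℝ 2 w U := hu.contDiffOn.sub hψ.contDiffOn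
  have hwbd (x) (hx : x ∈ K) (hxint : x ∉ interior K) : 0 ≤ w x := sub_nonneg.2 (hbd x hx hxint)
  have hΓU : Γ ⊆ U := fun x hx => hKU hx.1
  have hΓ : MeasurableSet Γ := measurableSet_lowerContactSet hu.isOpen hwU hK.isClosed hKU _
  have hrestrict : volume.restrict Γ ≤ volume.restrict K :=
    Measure.restrict_mono (fun x hx => hx.1) le_rfl
  have hhess (x) (hx : x ∈ Γ) := hu.hess_sub_of_mem_lowerContactSet hLam hKU hψ.contDiffAt hx
    (not_imp_comm.1 (hwbd x hx.1) hx.2.1.not_ge) (hDψ x hx.1) (htrace x hx.1)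
  have hSΓ : volume.restrict Γ S ≤ ENNReal.ofReal (v ^ n) := by
    rw [Measure.restrict_apply hS]
    exact hSv.trans' (measure_mono fun x hx => ⟨hx.1, (sub_neg.1 hx.2.2.1).le⟩)
  rw [← ENNReal.ofReal_le_ofReal_iff (by positivity)]
  calc ENNReal.ofReal (lam * (unitBallRoot n * (m / d)))
      ≤ eLpNorm (fun x => (m / d + L) * b x + f x + S.indicator (fun _ => g) x) n
          (volume.restrict Γ) :=
        ofReal_mul_unitBallRoot_mul_le_eLpNorm hu.isOpen hwU hK hKU hd hdist hwbd hm hx₀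
          (by simp only [w]; linarith) hlam.le hhess
    _ ≤ ENNReal.ofReal (m / d + L) * eLpNorm b n (volume.restrict Γ) +
          eLpNorm f n (volume.restrict Γ) +
          ENNReal.ofReal g * volume.restrict Γ S ^ (1 / (n : ℝ≥0∞).toReal) :=
        eLpNorm_const_mul_add_add_indicator_le (by exact_mod_cast NeZero.one_le)
          ((hu.continuousOn_drift.mono hΓU).aestronglyMeasurable hΓ)
          ((hu.continuousOn_rhs.mono hΓU).aestronglyMeasurable hΓ) (by positivity) hg hS
    _ ≤ ENNReal.ofReal (m / d + L) * ENNReal.ofReal β + ENNReal.ofReal φ +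
          ENNReal.ofReal g * ENNReal.ofReal (v ^ n) ^ (1 / (n : ℝ≥0∞).toReal) := by
        gcongr
        · exact (eLpNorm_mono_measure b hrestrict).trans hbβ
        · exact (eLpNorm_mono_measure f hrestrict).trans hfφ
    _ = ENNReal.ofReal ((m / d + L) * β + φ + g * v) := by
        rw [ENNReal.ofReal_pow hv, ENNReal.toReal_natCast, one_div,
          ENNReal.pow_rpow_inv_natCast (NeZero.ne n), ← ENNReal.ofReal_mul (by positivity),
          ← ENNReal.ofReal_mul hg, ← ENNReal.ofReal_add (by positivity) hφ,
          ← ENNReal.ofReal_add (by positivity) (by positivity)]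

end IsNonnegSupersolution
end Supersolution

section GaussianBarrier

variable {n : ℕ}

/-- The Gaussian barrier `T (exp (-c |x - y|²) - e)`. -/
noncomputable def gaussianBarrier (y : 𝔼 n) (c T e : ℝ) (x : 𝔼 n) : ℝ :=
  T * (Real.exp (-c * ‖x - y‖ ^ 2) - e)

variable (y : 𝔼 n) (c T e : ℝ)

lemma contDiff_gaussianBarrier : ContDiff ℝ 2 (gaussianBarrier y c T e) :=
  contDiff_const.mul
    (((contDiff_const.mul ((contDiff_id.sub contDiff_const).norm_sq ℝ)).exp).sub contDiff_const)

lemma hasFDerivAt_exp_neg_mul_norm_sub_sq (x : 𝔼 n) :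
    HasFDerivAt (fun x => Real.exp (-c * ‖x - y‖ ^ 2))
      ((-2 * c * Real.exp (-c * ‖x - y‖ ^ 2)) • innerSL ℝ (x - y)) x := by
  refine ((((hasFDerivAt_id x).sub_const y).norm_sq).const_mul (-c)).exp.congr_fderiv ?_
  ext v
  simp
  ring

lemma hasGradientAt_gaussianBarrier (x : 𝔼 n) :
    HasGradientAt (gaussianBarrier y c T e)
      ((-2 * T * c * Real.exp (-c * ‖x - y‖ ^ 2)) • (x - y)) x := by
  rw [hasGradientAt_iff_hasFDerivAt]
  refine (((hasFDerivAt_exp_neg_mul_norm_sub_sq y c x).sub_const e).const_mul T).congr_fderiv ?_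
  ext v
  simp
  ring

lemma hess_gaussianBarrier (x : 𝔼 n) :
    hess n (gaussianBarrier y c T e) x =
      (4 * T * c ^ 2 * Real.exp (-c * ‖x - y‖ ^ 2)) • Matrix.vecMulVec (x - y).ofLp (x - y).ofLp -
        (2 * T * c * Real.exp (-c * ‖x - y‖ ^ 2)) • (1 : Matrix (Fin n) (Fin n) ℝ) := by
  ext i j
  rw [hess_apply_of_hasGradientAt (.of_forall (hasGradientAt_gaussianBarrier y c T e))
    (((hasFDerivAt_exp_neg_mul_norm_sub_sq y c x).const_mul (-2 * T * c)).smul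
      ((hasFDerivAt_id x).sub_const y))]
  simp [Matrix.vecMulVec_apply, Matrix.one_apply, EuclideanSpace.inner_single_right,
    eq_comm (a := i)]
  split_ifs <;> ring

lemma norm_fderiv_gaussianBarrier_le {c T : ℝ} (hc : 0 ≤ c) (hT : 0 ≤ T) {x : 𝔼 n} {ρ : ℝ}
    (hx : ‖x - y‖ ≤ ρ) : ‖fderiv ℝ (gaussianBarrier y c T e) x‖ ≤ 2 * T * c * ρ := by
  rw [(hasGradientAt_gaussianBarrier y c T e x).hasFDerivAt.fderiv, LinearIsometryEquiv.norm_map,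
    norm_smul, Real.norm_eq_abs, show -2 * T * c * Real.exp (-c * ‖x - y‖ ^ 2) =
      -(2 * T * c * Real.exp (-c * ‖x - y‖ ^ 2)) by ring, abs_neg, abs_of_nonneg (by positivity)]
  have hexp : Real.exp (-c * ‖x - y‖ ^ 2) ≤ 1 :=
    Real.exp_le_one_iff.2 (by nlinarith [sq_nonneg ‖x - y‖])
  calc 2 * T * c * Real.exp (-c * ‖x - y‖ ^ 2) * ‖x - y‖ ≤ 2 * T * c * 1 * ρ := by gcongr
    _ = 2 * T * c * ρ := by ring

variable {y c T e} {lam Lam : ℝ} {A : Matrix (Fin n) (Fin n) ℝ}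

lemma le_trace_mul_hess_gaussianBarrier (hA : IsElliptic lam Lam A) (hc : 0 ≤ c) (hT : 0 ≤ T)
    (x : 𝔼 n) : 2 * T * c * Real.exp (-c * ‖x - y‖ ^ 2) * (2 * c * lam * ‖x - y‖ ^ 2 - n * Lam) ≤
      (A * hess n (gaussianBarrier y c T e) x).trace := by
  rw [hess_gaussianBarrier, EuclideanSpace.real_norm_sq_eq]
  refine (hA.le_trace_mul (by positivity) (by positivity) _).trans' (le_of_eq ?_)
  rw [dotProduct]
  simp only [← sq]
  ring

lemma gaussianBarrier_le (hc : 0 ≤ c) (hT : 0 ≤ T) (he : 0 ≤ e) (x : 𝔼 n) :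
    gaussianBarrier y c T e x ≤ T := by
  have hexp : Real.exp (-c * ‖x - y‖ ^ 2) ≤ 1 :=
    Real.exp_le_one_iff.2 (by nlinarith [sq_nonneg ‖x - y‖])
  exact mul_le_of_le_one_right hT (by linarith)

lemma le_gaussianBarrier (e : ℝ) (hc : 0 ≤ c) (hT : 0 ≤ T) {x : 𝔼 n} {ρ : ℝ} (hx : ‖x - y‖ ≤ ρ) :
    T * (Real.exp (-c * ρ ^ 2) - e) ≤ gaussianBarrier y c T e x := by
  unfold gaussianBarrier
  gcongr T * (Real.exp ?_ - e)
  rw [neg_mul, neg_mul, neg_le_neg_iff]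
  gcongr

lemma gaussianBarrier_eq_zero_of_notMem_interior {ρ : ℝ} (hρ : ρ ≠ 0) {x : 𝔼 n}
    (hx : x ∈ Metric.closedBall y ρ) (hxint : x ∉ interior (Metric.closedBall y ρ)) :
    gaussianBarrier y c T (Real.exp (-c * ρ ^ 2)) x = 0 := by
  rw [interior_closedBall y hρ, mem_ball_iff_norm, not_lt] at hxint
  rw [gaussianBarrier, (mem_closedBall_iff_norm.1 hx).antisymm hxint, sub_self, mul_zero]

end GaussianBarrier

section Growth

variable {n : ℕ} {lam Lam : ℝ} {U : Set (𝔼 n)} {b f u : 𝔼 n → ℝ}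

/-- The ball of radius `6 r` about `y` lies in `U`, and there the drift `b` and the right-hand side
`f` are small in the scale-invariant sense relevant to solutions of size `t`. -/
structure SmallData (U : Set (𝔼 n)) (b f : 𝔼 n → ℝ) (η : ℝ) (y : 𝔼 n) (r t : ℝ) : Prop where
  subset : Metric.closedBall y (6 * r) ⊆ U
  drift_le : eLpNorm b n (volume.restrict (Metric.closedBall y (6 * r))) ≤ ENNReal.ofReal η
  rhs_le : eLpNorm f n (volume.restrict (Metric.closedBall y (6 * r))) ≤ ENNReal.ofReal (η * t / r)

lemma SmallData.mono {η r r' t t' : ℝ} {y y' : 𝔼 n} (h : SmallData U b f η y r t) (hη : 0 ≤ η)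
    (hyy' : dist y' y + 6 * r' ≤ 6 * r) (hr' : 0 < r') (hrr' : r' ≤ r) (ht : 0 ≤ t)
    (htt' : t ≤ t') : SmallData U b f η y' r' t' := by
  have hball : Metric.closedBall y' (6 * r') ⊆ Metric.closedBall y (6 * r) :=
    Metric.closedBall_subset_closedBall' (by linarith)
  refine ⟨hball.trans h.subset, (eLpNorm_mono_measure b (Measure.restrict_mono hball le_rfl)).trans
    h.drift_le, (eLpNorm_mono_measure f (Measure.restrict_mono hball le_rfl)).trans
    (h.rhs_le.trans (ENNReal.ofReal_le_ofReal ?_))⟩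
  have ht' : 0 ≤ t' := ht.trans htt'
  gcongr

/-- If a solution with small data is at most `t` somewhere in the ball of radius `5 r`, then it is
at most `M t` on a proportion `μ` of the concentric ball of radius `r`. -/
def GrowthProperty (n : ℕ) (lam Lam M μ η : ℝ) : Prop :=
  ∀ (U : Set (𝔼 n)) (b f u : 𝔼 n → ℝ), IsNonnegSupersolution lam Lam U b f u →
    ∀ (y z : 𝔼 n) (r t : ℝ), 0 < r → 0 < t → SmallData U b f η y r t → dist z y ≤ 5 * r →
      u z ≤ t → ENNReal.ofReal μ * volume (Metric.closedBall y r) ≤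
        volume {x ∈ Metric.closedBall y r | u x ≤ M * t}

lemma neg_indicator_le_trace_mul_hess_gaussianBarrier {A : Matrix (Fin n) (Fin n) ℝ} {y : 𝔼 n}
    {α r T e : ℝ} (hA : IsElliptic lam Lam A) (hLam : 0 ≤ Lam) (hlam : 0 ≤ lam)
    (hα : 2 * α * lam = n * Lam) (hα0 : 0 ≤ α) (hr : 0 < r) (hT : 0 ≤ T) (x : 𝔼 n) :
    -(Metric.closedBall y r).indicator (fun _ => 2 * T * (α / r ^ 2) * (n * Lam)) x ≤
      (A * hess n (gaussianBarrier y (α / r ^ 2) T e) x).trace := by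
  refine (le_trace_mul_hess_gaussianBarrier hA (by positivity) hT x).trans' ?_
  have hexp : Real.exp (-(α / r ^ 2) * ‖x - y‖ ^ 2) ≤ 1 :=
    Real.exp_le_one_iff.2 (by rw [neg_mul, neg_nonpos]; positivity)
  by_cases hx : x ∈ Metric.closedBall y r
  · rw [Set.indicator_of_mem hx]
    calc -(2 * T * (α / r ^ 2) * (n * Lam))
        ≤ -(2 * T * (α / r ^ 2) * Real.exp (-(α / r ^ 2) * ‖x - y‖ ^ 2) * (n * Lam)) := by
          refine neg_le_neg (mul_le_mul_of_nonneg_right ?_ (by positivity))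
          exact mul_le_of_le_one_right (by positivity) hexp
      _ ≤ 2 * T * (α / r ^ 2) * Real.exp (-(α / r ^ 2) * ‖x - y‖ ^ 2) *
            (2 * (α / r ^ 2) * lam * ‖x - y‖ ^ 2 - n * Lam) := by
          rw [← mul_neg]
          gcongr
          have : 0 ≤ 2 * (α / r ^ 2) * lam * ‖x - y‖ ^ 2 := by positivity
          linarith
  · rw [Set.indicator_of_notMem hx, neg_zero]
    have hxr : r ^ 2 ≤ ‖x - y‖ ^ 2 := by
      rw [Metric.mem_closedBall, not_le, dist_eq_norm] at hx
      gcongr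
    have hconvex : n * Lam ≤ 2 * (α / r ^ 2) * lam * ‖x - y‖ ^ 2 := calc
      n * Lam = 2 * (α / r ^ 2) * lam * r ^ 2 := by
        rw [← hα]
        field_simp
      _ ≤ 2 * (α / r ^ 2) * lam * ‖x - y‖ ^ 2 := by gcongr
    exact mul_nonneg (by positivity) (sub_nonneg.2 hconvex)

lemma two_mul_le_gaussianBarrier {α M r t : ℝ} {y z : 𝔼 n} (hα : 0 ≤ α) (hM0 : 0 ≤ M)
    (hM : M * (Real.exp (-(25 * α)) - Real.exp (-(36 * α))) = 2) (hr : 0 < r) (ht : 0 ≤ t)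
    (hzy : dist z y ≤ 5 * r) :
    2 * t ≤
      gaussianBarrier y (α / r ^ 2) (M * t) (Real.exp (-(α / r ^ 2) * (6 * r) ^ 2)) z := by
  calc 2 * t = M * t * (Real.exp (-(25 * α)) - Real.exp (-(36 * α))) := by
        rw [mul_right_comm, hM]
    _ = M * t * (Real.exp (-(α / r ^ 2) * (5 * r) ^ 2) -
          Real.exp (-(α / r ^ 2) * (6 * r) ^ 2)) := by
        congr 3 <;> field_simp <;> ring
    _ ≤ _ := le_gaussianBarrier _ (by positivity) (by positivity) (dist_eq_norm z y ▸ hzy)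

lemma growthProperty_of_constants [NeZero n] (hlam : 0 < lam) (hLam : lam ≤ Lam) {α M η κ : ℝ}
    (hα0 : 0 < α) (hα : 2 * α * lam = n * Lam) (hM0 : 0 < M)
    (hM : M * (Real.exp (-(25 * α)) - Real.exp (-(36 * α))) = 2) (hη : 0 < η) (hκ : 0 < κ)
    (hsmall : (1 / 12 + 12 * α * M) * η + η + 2 * M * α * (n * Lam) * (κ * unitBallRoot n) <
      lam * unitBallRoot n / 12) : GrowthProperty n lam Lam M (κ ^ n) η := by
  intro U b f u hu y z r t hr ht hdata hzy hzt
  have hroot := unitBallRoot_pos (n := n)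
  have hΛ : 0 < Lam := hlam.trans_le hLam
  by_contra! hfew
  rw [volume_closedBall_eq_ofReal_unitBallRoot_pow y hr.le, ← ENNReal.ofReal_mul (by positivity),
    ← mul_pow] at hfew
  -- The barrier vanishes on the sphere of radius `6 r`, is at least `2 t` on the ball of radius
  -- `5 r`, and is a subsolution outside the ball of radius `r`.
  let ψ := gaussianBarrier y (α / r ^ 2) (M * t) (Real.exp (-(α / r ^ 2) * (6 * r) ^ 2))
  have hψt (x) : ψ x ≤ M * t :=
    gaussianBarrier_le (by positivity) (by positivity) (Real.exp_nonneg _) x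
  have hzpeak : 2 * t ≤ ψ z := two_mul_le_gaussianBarrier hα0.le hM0.le hM hr ht.le hzy
  have hbd (x) (hx : x ∈ Metric.closedBall y (6 * r))
      (hxint : x ∉ interior (Metric.closedBall y (6 * r))) : ψ x ≤ u x :=
    (gaussianBarrier_eq_zero_of_notMem_interior (by positivity) hx hxint).trans_le
      (hu.nonneg x (hdata.subset hx))
  have habp := hu.abp hlam hLam (isCompact_closedBall y (6 * r)) hdata.subset
    (d := 12 * r) (by positivity)
    (fun x hx x' hx' => (dist_triangle_right x x' y).trans (by
      rw [Metric.mem_closedBall] at hx hx'; linarith))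
    (contDiff_gaussianBarrier y _ _ _)
    (fun x hx => norm_fderiv_gaussianBarrier_le y _ (by positivity) (by positivity)
      (mem_closedBall_iff_norm.1 hx))
    measurableSet_closedBall (g := 2 * (M * t) * (α / r ^ 2) * (n * Lam)) (by positivity)
    (fun x _ A hA => neg_indicator_le_trace_mul_hess_gaussianBarrier hA hΛ.le hlam.le hα hα0.le hr
      (by positivity) x)
    hbd ht.le (Metric.mem_closedBall.2 (hzy.trans (by linarith))) (by linarith) hη.le
    (φ := η * t / r) (by positivity) (v := κ * (unitBallRoot n * r)) (by positivity)
    hdata.drift_le hdata.rhs_le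
    (hfew.le.trans' (measure_mono fun x hx => ⟨hx.1, hx.2.trans (hψt x)⟩))
  have hscale : (t / (12 * r) + 2 * (M * t) * (α / r ^ 2) * (6 * r)) * η + η * t / r +
      2 * (M * t) * (α / r ^ 2) * (n * Lam) * (κ * (unitBallRoot n * r)) =
      t / r * ((1 / 12 + 12 * α * M) * η + η +
        2 * M * α * (n * Lam) * (κ * unitBallRoot n)) := by
    field_simp
    ring
  have hlhs : lam * (unitBallRoot n * (t / (12 * r))) = t / r * (lam * unitBallRoot n / 12) := by
    field_simp
  rw [hscale, hlhs] at habp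
  exact habp.not_gt (mul_lt_mul_of_pos_left hsmall (by positivity))

theorem exists_growthProperty [NeZero n] (hlam : 0 < lam) (hLam : lam ≤ Lam) :
    ∃ M μ η : ℝ, 1 < M ∧ 0 < μ ∧ 0 < η ∧ GrowthProperty n lam Lam M μ η := by
  have hroot := unitBallRoot_pos (n := n)
  have hΛ : 0 < Lam := hlam.trans_le hLam
  have hn : 0 < (n : ℝ) := Nat.cast_pos.2 (NeZero.pos n)
  let α := n * Lam / (2 * lam)
  have hα0 : 0 < α := by positivity
  let δ := Real.exp (-(25 * α)) - Real.exp (-(36 * α))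
  have hδ : 0 < δ := sub_pos.2 (Real.exp_lt_exp.2 (by linarith))
  have hδ1 : δ < 1 := (sub_lt_self _ (Real.exp_pos _)).trans_le
    (Real.exp_le_one_iff.2 (by linarith))
  let M := 2 / δ
  have hM : 1 < M := (one_lt_div hδ).2 (by linarith)
  let C₁ := 1 / 12 + 12 * α * M + 1
  let C₂ := 2 * M * α * (n * Lam)
  have hC₁ : 0 < C₁ := by positivity
  have hC₂ : 0 < C₂ := by positivity
  refine ⟨M, (lam / (48 * C₂)) ^ n, lam * unitBallRoot n / (48 * C₁), hM, by positivity,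
    by positivity, growthProperty_of_constants hlam hLam hα0 (by simp only [α]; field_simp)
    (by positivity) (div_mul_cancel₀ _ hδ.ne') (by positivity) (by positivity) ?_⟩
  calc (1 / 12 + 12 * α * M) * (lam * unitBallRoot n / (48 * C₁)) +
        lam * unitBallRoot n / (48 * C₁) + C₂ * (lam / (48 * C₂) * unitBallRoot n)
      = C₁ * (lam * unitBallRoot n / (48 * C₁)) + C₂ * (lam / (48 * C₂) * unitBallRoot n) := by
        ring
    _ = lam * unitBallRoot n / 24 := by
        field_simp
        norm_num
    _ < lam * unitBallRoot n / 12 := by gcongr; norm_num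

end Growth

lemma eLpNorm_le_mul_rpow_of_subset_closedBall {n : ℕ} [NeZero n] {q : ℝ} (hq : n ≤ q)
    {S : Set (𝔼 n)} {y : 𝔼 n} {r : ℝ} (hr : 0 < r) (hS : S ⊆ Metric.closedBall y r)
    {g : 𝔼 n → ℝ} (hg : AEStronglyMeasurable g (volume.restrict S)) {a : ℝ} (ha : 0 ≤ a)
    (hga : eLpNorm g (ENNReal.ofReal q) (volume.restrict S) ≤ ENNReal.ofReal a) :
    eLpNorm g n (volume.restrict S) ≤ ENNReal.ofReal (a * (unitBallRoot n * r) ^ (1 - n / q)) := by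
  have hroot := unitBallRoot_pos (n := n)
  have hn : 0 < (n : ℝ) := Nat.cast_pos.2 (NeZero.pos n)
  have hq0 : 0 < q := hn.trans_le hq
  have hexp : 0 ≤ 1 / (n : ℝ) - 1 / q := sub_nonneg.2 (one_div_le_one_div_of_le hn hq)
  have hSr : volume.restrict S Set.univ ≤ ENNReal.ofReal ((unitBallRoot n * r) ^ n) := by
    rw [Measure.restrict_apply_univ, ← volume_closedBall_eq_ofReal_unitBallRoot_pow y hr.le]
    exact measure_mono hS
  calc eLpNorm g n (volume.restrict S)
      ≤ eLpNorm g (ENNReal.ofReal q) (volume.restrict S) *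
          volume.restrict S Set.univ ^ (1 / (n : ℝ) - 1 / q) := by
        have h := eLpNorm_le_eLpNorm_mul_rpow_measure_univ
          (by rwa [← ENNReal.ofReal_natCast, ENNReal.ofReal_le_ofReal_iff hq0.le] :
            (n : ℝ≥0∞) ≤ ENNReal.ofReal q) hg
        rwa [ENNReal.toReal_natCast, ENNReal.toReal_ofReal hq0.le] at h
    _ ≤ ENNReal.ofReal a *
          ENNReal.ofReal ((unitBallRoot n * r) ^ n) ^ (1 / (n : ℝ) - 1 / q) := by gcongr
    _ = ENNReal.ofReal (a * (unitBallRoot n * r) ^ (1 - n / q)) := by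
        rw [ENNReal.ofReal_rpow_of_pos (by positivity), ← ENNReal.ofReal_mul ha,
          ← Real.rpow_natCast_mul (by positivity), mul_sub, mul_one_div_cancel hn.ne',
          mul_one_div]

lemma exists_radius_mul_rpow_le {K C τ R η : ℝ} (hτ : 0 < τ) (hR : 0 < R)
    (hη : 0 < η) : ∃ r, 0 < r ∧ r < R ∧ K * (C * r) ^ τ ≤ η := by
  have hcont : ContinuousAt (fun r => K * (C * r) ^ τ) 0 :=
    continuousAt_const.mul ((continuousAt_const.mul continuousAt_id).rpow_const (.inr hτ.le))
  have hzero : K * (C * 0) ^ τ < η := by rwa [mul_zero, Real.zero_rpow hτ.ne', mul_zero]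
  obtain ⟨r, hle, hr⟩ := ((hcont.eventually_lt_const hzero).filter_mono nhdsWithin_le_nhds |>.and
    (Ioo_mem_nhdsGT hR)).exists
  exact ⟨r, hr.1, hr.2, hle.le⟩

lemma exists_closedBall_subset_diff {E : Type*} [NormedAddCommGroup E] [NormedSpace ℝ E] {F : Set E}
    {x y : E} {r : ℝ} (hF : IsCompact F) (hFy : F ⊆ Metric.closedBall y r) (hFne : F.Nonempty)
    (hx : x ∈ Metric.closedBall y r \ F) :
    ∃ c ρ, 0 < ρ ∧ dist c y + ρ ≤ r ∧ x ∈ Metric.closedBall c ρ ∧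
      Disjoint (Metric.closedBall c ρ) F ∧ ∃ z ∈ F, dist z c ≤ 5 * ρ := by
  obtain ⟨z, hzF, hz⟩ := hF.exists_infDist_eq_dist hFne x
  have hd : 0 < Metric.infDist x F := (hF.isClosed.notMem_iff_infDist_pos hFne).1 hx.2
  have hxy : dist x y ≤ r := hx.1
  have hdr : Metric.infDist x F ≤ 2 * r := by
    rw [hz]
    linarith [dist_triangle_right x z y, Metric.mem_closedBall.1 (hFy hzF)]
  have hr : 0 < r := by linarith
  obtain ⟨ρ, hρd⟩ : ∃ ρ, Metric.infDist x F = 4 * ρ := ⟨_, (mul_div_cancel₀ _ four_ne_zero).symm⟩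
  have hρ : 0 < ρ := by linarith
  have hρr : ρ / r ≤ 1 := (div_le_one hr).2 (by linarith)
  let c := AffineMap.lineMap x y (ρ / r)
  have hcx : dist x c ≤ ρ := by
    rw [dist_left_lineMap, Real.norm_of_nonneg (by positivity)]
    calc ρ / r * dist x y ≤ ρ / r * r := by gcongr
      _ = ρ := div_mul_cancel₀ _ hr.ne'
  have hcy : dist c y ≤ r - ρ := by
    rw [dist_lineMap_right, Real.norm_of_nonneg (sub_nonneg.2 hρr)]
    calc (1 - ρ / r) * dist x y ≤ (1 - ρ / r) * r :=
          mul_le_mul_of_nonneg_left hxy (sub_nonneg.2 hρr)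
      _ = r - ρ := by field_simp
  refine ⟨c, ρ, hρ, by linarith, hcx, Set.disjoint_left.2 fun w hw hwF => ?_, z, hzF, ?_⟩
  · have hxw := Metric.infDist_le_dist_of_mem (x := x) hwF
    have htri := dist_triangle_right x w c
    linarith [Metric.mem_closedBall.1 hw]
  · have htri := dist_triangle_left z c x
    rw [← hz] at htri
    linarith

theorem mul_measure_le_pow_mul_measure_inter {E : Type*} [NormedAddCommGroup E] [NormedSpace ℝ E]
    [FiniteDimensional ℝ E] [MeasurableSpace E] [BorelSpace E] (μ : Measure E) [μ.IsAddHaarMeasure]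
    {A B : Set E} {θ : ℝ≥0∞} {R : ℝ}
    (h : ∀ x ∈ A, ∃ c ρ, 0 < ρ ∧ ρ ≤ R ∧ x ∈ Metric.closedBall c ρ ∧ Metric.closedBall c ρ ⊆ A ∧
      θ * μ (Metric.closedBall c ρ) ≤ μ (Metric.closedBall c ρ ∩ B)) :
    θ * μ A ≤ 5 ^ Module.finrank ℝ E * μ (A ∩ B) := by
  choose! c ρ hρ hρR hxρ hρA hθ using h
  obtain ⟨v, hvA, hdisj, hcover⟩ :=
    Vitali.exists_disjoint_subfamily_covering_enlargement_closedBall A c ρ R hρR 5 (by norm_num)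
  have hv : v.Countable := hdisj.countable_of_nonempty_interior fun x hx =>
    (Metric.nonempty_ball.2 (hρ x (hvA hx))).mono Metric.ball_subset_interior_closedBall
  have hsub : (⋃ x ∈ v, Metric.closedBall (c x) (ρ x)) ⊆ A :=
    Set.iUnion₂_subset fun x hx => hρA x (hvA hx)
  have hAcover : A ⊆ ⋃ x ∈ v, Metric.closedBall (c x) (5 * ρ x) := fun x hx => by
    obtain ⟨y, hyv, hy⟩ := hcover x hx
    exact Set.mem_biUnion hyv (hy (hxρ x hx))
  have henlarge (x) (hx : x ∈ v) : μ (Metric.closedBall (c x) (5 * ρ x)) =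
      5 ^ Module.finrank ℝ E * μ (Metric.closedBall (c x) (ρ x)) := by
    rw [Measure.addHaar_closedBall_mul μ _ (by norm_num) (hρ x (hvA hx)).le,
      Measure.addHaar_closedBall_center μ (c x), ENNReal.ofReal_pow (by norm_num),
      ENNReal.ofReal_ofNat]
  calc θ * μ A ≤ θ * ∑' x : v, μ (Metric.closedBall (c x) (5 * ρ x)) := by
        gcongr
        exact (measure_mono hAcover).trans (measure_biUnion_le μ hv _)
    _ = 5 ^ Module.finrank ℝ E * ∑' x : v, θ * μ (Metric.closedBall (c x) (ρ x)) := by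
        simp_rw [henlarge _ (Subtype.coe_prop _), ENNReal.tsum_mul_left]
        ring
    _ ≤ 5 ^ Module.finrank ℝ E * ∑' x : v, μ.restrict B (Metric.closedBall (c x) (ρ x)) := by
        gcongr with x
        rw [Measure.restrict_apply measurableSet_closedBall]
        exact hθ x (hvA x.2)
    _ = 5 ^ Module.finrank ℝ E * μ ((⋃ x ∈ v, Metric.closedBall (c x) (ρ x)) ∩ B) := by
        rw [← measure_biUnion hv hdisj fun _ _ => measurableSet_closedBall,
          Measure.restrict_apply (.biUnion hv fun _ _ => measurableSet_closedBall)]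
    _ ≤ 5 ^ Module.finrank ℝ E * μ (A ∩ B) := by gcongr

lemma exists_measure_div_card_le_measure_inter {α ι : Type*} [MeasurableSpace α] {μ : Measure α}
    {A : Set α} {T : Finset ι} {s : ι → Set α} (hA : A ⊆ ⋃ i ∈ T, s i) (hμA : μ A ≠ 0) :
    ∃ i ∈ T, μ A / T.card ≤ μ (A ∩ s i) := by
  have hT : T.Nonempty := by
    by_contra hT
    simp_all [Finset.not_nonempty_iff_eq_empty]
  by_contra! hlt
  refine (ENNReal.sum_lt_sum_of_nonempty hT hlt).not_ge ?_
  calc ∑ _i ∈ T, μ A / T.card = μ A := by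
        rw [Finset.sum_const, nsmul_eq_mul, ENNReal.mul_div_cancel (by simpa using hT.ne_empty)
          (ENNReal.natCast_ne_top _)]
    _ ≤ ∑ i ∈ T, μ (A ∩ s i) := by
        refine (measure_mono fun x hx => ?_).trans (measure_biUnion_finset_le T fun i => A ∩ s i)
        obtain ⟨i, hi, hxi⟩ := Set.mem_iUnion₂.1 (hA hx)
        exact Set.mem_biUnion hi ⟨hx, hxi⟩

section InteriorEstimate

variable {n : ℕ} {lam Lam M μ η : ℝ} {U Z : Set (𝔼 n)} {b f u : 𝔼 n → ℝ} {y : 𝔼 n} {r s t θ : ℝ}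

lemma IsNonnegSupersolution.measurableSet_lt (hu : IsNonnegSupersolution lam Lam U b f u)
    {D : Set (𝔼 n)} (hD : MeasurableSet D) (hDU : D ⊆ U) (s : ℝ) :
    MeasurableSet {x ∈ D | s < u x} := by
  have hopen := hu.contDiffOn.continuousOn.isOpen_inter_preimage hu.isOpen (isOpen_Ioi (a := s))
  convert hD.inter hopen.measurableSet using 1
  ext x
  exact ⟨fun hx => ⟨hx.1, hDU hx.1, hx.2⟩, fun hx => ⟨hx.1, hx.2.2⟩⟩

namespace GrowthProperty

lemma mul_measure_lt_le (hG : GrowthProperty n lam Lam M μ η)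
    (hu : IsNonnegSupersolution lam Lam U b f u) (hη : 0 ≤ η) (hs : 0 < s)
    (hdata : SmallData U b f η y r s) {z : 𝔼 n} (hz : z ∈ Metric.closedBall y r) (hzs : u z ≤ s) :
    ENNReal.ofReal μ * volume {x ∈ Metric.closedBall y r | s < u x} ≤
      5 ^ n * volume ({x ∈ Metric.closedBall y r | s < u x} ∩ {x | u x ≤ M * s}) := by
  have hr : 0 ≤ r := dist_nonneg.trans hz
  have hDU : Metric.closedBall y r ⊆ U :=
    (Metric.closedBall_subset_closedBall (by linarith)).trans hdata.subset
  let F := {x ∈ Metric.closedBall y r | u x ≤ s}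
  have hF : IsCompact F := (isCompact_closedBall y r).of_isClosed_subset
    ((hu.contDiffOn.continuousOn.mono hDU).preimage_isClosed_of_isClosed
      Metric.isClosed_closedBall isClosed_Iic) fun x hx => hx.1
  have hpow := mul_measure_le_pow_mul_measure_inter volume (θ := ENNReal.ofReal μ) (R := r)
    (A := {x ∈ Metric.closedBall y r | s < u x}) (B := {x | u x ≤ M * s}) fun x hx => by
      obtain ⟨c, ρ, hρ, hcρ, hxc, hdisj, w, hwF, hwc⟩ := exists_closedBall_subset_diff hF
        (fun x hx => hx.1) ⟨z, hz, hzs⟩ ⟨hx.1, fun hxF => hx.2.not_ge hxF.2⟩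
      have hρr : ρ ≤ r := by linarith [dist_nonneg (x := c) (y := y)]
      have hball : Metric.closedBall c ρ ⊆ Metric.closedBall y r :=
        Metric.closedBall_subset_closedBall' (by linarith)
      have hdata' : SmallData U b f η c ρ s :=
        hdata.mono hη (by linarith) hρ hρr hs.le le_rfl
      refine ⟨c, ρ, hρ, hρr, hxc, fun v hv => ⟨hball hv, not_le.1 fun hvs => ?_⟩,
        hG U b f u hu c w ρ s hρ hs hdata' hwc hwF.2⟩
      exact Set.disjoint_left.1 hdisj hv ⟨hball hv, hvs⟩
  rwa [finrank_euclideanSpace, Fintype.card_fin] at hpow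

lemma measureReal_mul_lt_le (hG : GrowthProperty n lam Lam M μ η)
    (hu : IsNonnegSupersolution lam Lam U b f u) (hM : 1 ≤ M) (hμ : 0 ≤ μ) (hη : 0 ≤ η)
    (hs : 0 < s) (hdata : SmallData U b f η y r s) {z : 𝔼 n} (hz : z ∈ Metric.closedBall y r)
    (hzs : u z ≤ s) (hθ : 1 - μ / 5 ^ n ≤ θ) :
    volume.real {x ∈ Metric.closedBall y r | M * s < u x} ≤
      θ * volume.real {x ∈ Metric.closedBall y r | s < u x} := by
  have hDU : Metric.closedBall y r ⊆ U := (Metric.closedBall_subset_closedBall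
    (by linarith [dist_nonneg.trans hz])).trans hdata.subset
  have hfin (s : ℝ) : volume {x ∈ Metric.closedBall y r | s < u x} ≠ ∞ :=
    measure_ne_top_of_subset (fun x hx => hx.1) measure_closedBall_lt_top.ne
  have hsub : {x ∈ Metric.closedBall y r | M * s < u x} ⊆
      {x ∈ Metric.closedBall y r | s < u x} :=
    fun x hx => ⟨hx.1, (le_mul_of_one_le_left hs.le hM).trans_lt hx.2⟩
  have hdiff : {x ∈ Metric.closedBall y r | s < u x} ∩ {x | u x ≤ M * s} =
      {x ∈ Metric.closedBall y r | s < u x} \ {x ∈ Metric.closedBall y r | M * s < u x} := by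
    ext x
    simp only [Set.mem_inter_iff, Set.mem_sdiff, Set.mem_ofPred_eq, not_and, not_lt]
    tauto
  have hmul := ENNReal.toReal_mono
    (ENNReal.mul_ne_top (by finiteness) (measure_ne_top_of_subset Set.inter_subset_left (hfin s)))
    (hG.mul_measure_lt_le hu hη hs hdata hz hzs)
  rw [hdiff, ENNReal.toReal_mul, ENNReal.toReal_mul, ENNReal.toReal_ofReal hμ, ENNReal.toReal_pow,
    ENNReal.toReal_ofNat, ← measureReal_def, ← measureReal_def,
    measureReal_sdiff hsub (hu.measurableSet_lt measurableSet_closedBall hDU _)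
      (hfin _), mul_comm (5 ^ n), ← div_le_iff₀ (by positivity)] at hmul
  calc volume.real {x ∈ Metric.closedBall y r | M * s < u x}
      ≤ (1 - μ / 5 ^ n) * volume.real {x ∈ Metric.closedBall y r | s < u x} := by
        linear_combination hmul
    _ ≤ θ * volume.real {x ∈ Metric.closedBall y r | s < u x} := by gcongr

lemma measureReal_pow_mul_lt_le (hG : GrowthProperty n lam Lam M μ η)
    (hu : IsNonnegSupersolution lam Lam U b f u) (hM : 1 ≤ M) (hμ : 0 ≤ μ) (hη : 0 ≤ η) (hr : 0 < r)
    (ht : 0 < t) (hdata : SmallData U b f η y r t) {z : 𝔼 n} (hz : z ∈ Metric.closedBall y r)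
    (hzt : u z ≤ t) (hθ : 0 ≤ θ) (hμθ : 1 - μ / 5 ^ n ≤ θ) (j : ℕ) :
    volume.real {x ∈ Metric.closedBall y r | M ^ j * t < u x} ≤
      θ ^ j * volume.real {x ∈ Metric.closedBall y r | t < u x} := by
  induction j with
  | zero => simp
  | succ j ih =>
    have hts : t ≤ M ^ j * t := le_mul_of_one_le_left ht.le (one_le_pow₀ hM)
    have hdata' : SmallData U b f η y r (M ^ j * t) :=
      hdata.mono hη (by simp) hr le_rfl ht.le hts
    calc volume.real {x ∈ Metric.closedBall y r | M ^ (j + 1) * t < u x}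
        = volume.real {x ∈ Metric.closedBall y r | M * (M ^ j * t) < u x} := by
          rw [pow_succ', mul_assoc]
      _ ≤ θ * volume.real {x ∈ Metric.closedBall y r | M ^ j * t < u x} :=
          hG.measureReal_mul_lt_le hu hM hμ hη (ht.trans_le hts) hdata' hz (hzt.trans hts) hμθ
      _ ≤ θ * (θ ^ j * volume.real {x ∈ Metric.closedBall y r | t < u x}) := by gcongr
      _ = θ ^ (j + 1) * volume.real {x ∈ Metric.closedBall y r | t < u x} := by ring

theorem exists_lt_on_closedBall [NeZero n] (hG : GrowthProperty n lam Lam M μ η) (hM : 1 ≤ M)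
    (hμ : 0 < μ) (hη : 0 ≤ η) (hr : 0 < r) {m ν : ℝ} (hm : 0 < m) (hν : 0 < ν) :
    ∃ t, 0 < t ∧ ∀ (U : Set (𝔼 n)) (b f u : 𝔼 n → ℝ), IsNonnegSupersolution lam Lam U b f u →
      ∀ y, SmallData U b f η y r t → ν ≤ volume.real {x ∈ Metric.closedBall y r | m < u x} →
        ∀ z ∈ Metric.closedBall y r, t < u z := by
  let θ := max 0 (1 - μ / 5 ^ n)
  have hθ1 : θ < 1 := max_lt one_pos (sub_lt_self _ (by positivity))
  have hroot := unitBallRoot_pos (n := n)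
  obtain ⟨j, hj⟩ := exists_pow_lt_of_lt_one (y := θ)
    (div_pos hν (pow_pos (mul_pos hroot hr) n)) hθ1
  refine ⟨m / M ^ j, by positivity, fun U b f u hu y hdata hνm z hz => ?_⟩
  by_contra! hzt
  refine hνm.not_gt ?_
  calc volume.real {x ∈ Metric.closedBall y r | m < u x}
      = volume.real {x ∈ Metric.closedBall y r | M ^ j * (m / M ^ j) < u x} := by
        rw [mul_div_cancel₀ m (by positivity)]
    _ ≤ θ ^ j * volume.real {x ∈ Metric.closedBall y r | m / M ^ j < u x} :=
        hG.measureReal_pow_mul_lt_le hu hM hμ.le hη hr (by positivity) hdata hz hzt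
          (le_max_left _ _) (le_max_right _ _) j
    _ ≤ θ ^ j * (unitBallRoot n * r) ^ n := by
        rw [← volume_real_closedBall y hr.le]
        have hsub : {x ∈ Metric.closedBall y r | m / M ^ j < u x} ⊆ Metric.closedBall y r :=
          fun x hx => hx.1
        gcongr
        exact measure_closedBall_lt_top.ne
    _ < ν := (lt_div_iff₀ (by positivity)).1 hj

lemma lt_of_lt_on_closedBall (hG : GrowthProperty n lam Lam M μ η)
    (hu : IsNonnegSupersolution lam Lam U b f u) (hμ : 0 < μ) (hr : 0 < r) (hs : 0 < s)
    (hdata : SmallData U b f η y r s) (hlt : ∀ x ∈ Metric.closedBall y r, M * s < u x) {z : 𝔼 n}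
    (hz : dist z y ≤ 5 * r) : s < u z := by
  by_contra! hzs
  have hgrowth := hG U b f u hu y z r s hr hs hdata hz hzs
  have hempty : {x ∈ Metric.closedBall y r | u x ≤ M * s} = ∅ :=
    Set.eq_empty_iff_forall_notMem.2 fun x hx => (hlt x hx.1).not_ge hx.2
  rw [hempty, measure_empty] at hgrowth
  exact hgrowth.not_gt (ENNReal.mul_pos (by simpa) (Metric.measure_closedBall_pos volume y hr).ne')

lemma lt_on_closedBall_of_dist_le (hG : GrowthProperty n lam Lam M μ η)
    (hu : IsNonnegSupersolution lam Lam U b f u) (hM : 1 ≤ M) (hμ : 0 < μ) (hη : 0 ≤ η)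
    (hr : 0 < r) (ht : 0 < t) (hZ : Convex ℝ Z) (hdata : ∀ x ∈ Z, SmallData U b f η x r t)
    (hy : y ∈ Z) (j : ℕ) {s : ℝ} (hts : t ≤ s)
    (hlt : ∀ z ∈ Metric.closedBall y r, M ^ j * s < u z) {x : 𝔼 n} (hx : x ∈ Z)
    (hxy : dist y x ≤ j * (4 * r)) : ∀ z ∈ Metric.closedBall x r, s < u z := by
  induction j generalizing s x with
  | zero =>
    have hyx : y = x := by simpa using hxy
    simpa [← hyx] using hlt
  | succ j ih =>
    have hs : 0 < s := ht.trans_le hts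
    have hj : (0 : ℝ) < j + 1 := by positivity
    push_cast at hxy
    let w := AffineMap.lineMap y x ((j : ℝ) / (j + 1))
    have hw : w ∈ Z := hZ.lineMap_mem hy hx ⟨by positivity, (div_le_one hj).2 (by linarith)⟩
    have hyw : dist y w ≤ j * (4 * r) := by
      rw [dist_left_lineMap, Real.norm_of_nonneg (by positivity), div_mul_eq_mul_div,
        div_le_iff₀ hj]
      nlinarith [Nat.cast_nonneg (α := ℝ) j]
    have hwx : dist w x ≤ 4 * r := by
      rw [dist_lineMap_right, one_sub_div hj.ne', add_sub_cancel_left,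
        Real.norm_of_nonneg (by positivity), div_mul_eq_mul_div, one_mul, div_le_iff₀ hj]
      linarith
    have hMs : s ≤ M * s := le_mul_of_one_le_left hs.le hM
    have hltw := ih (hts.trans hMs) (by simpa only [pow_succ, mul_assoc] using hlt) hw hyw
    intro z hz
    refine hG.lt_of_lt_on_closedBall hu hμ hr hs
      ((hdata w hw).mono hη (by simp) hr le_rfl ht.le hts) hltw ?_
    linarith [dist_triangle z x w, dist_comm x w, Metric.mem_closedBall.1 hz]

end GrowthProperty

lemma exists_finset_closedBall_measureReal_ge (hZ : IsCompact Z) (hr : 0 < r) :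
    ∃ T : Finset (𝔼 n), ↑T ⊆ Z ∧ ∀ A ⊆ Z, ∀ {ν : ℝ}, 0 < ν → ENNReal.ofReal ν ≤ volume A →
      ∃ y ∈ T, ν / (T.card + 1) ≤ volume.real (A ∩ Metric.closedBall y r) := by
  obtain ⟨T, hTZ, hT, hcover⟩ := hZ.finite_cover_balls hr
  lift T to Finset (𝔼 n) using hT
  refine ⟨T, hTZ, fun A hAZ ν hν hνA => ?_⟩
  have hA0 : volume A ≠ 0 := ((ENNReal.ofReal_pos.2 hν).trans_le hνA).ne'
  have hcoverA : A ⊆ ⋃ y ∈ T, Metric.closedBall y r :=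
    hAZ.trans (hcover.trans (Set.iUnion₂_mono fun y _ => Metric.ball_subset_closedBall))
  obtain ⟨y, hyT, hy⟩ := exists_measure_div_card_le_measure_inter hcoverA hA0
  refine ⟨y, hyT, (ENNReal.ofReal_le_iff_le_toReal (measure_ne_top_of_subset
    Set.inter_subset_right measure_closedBall_lt_top.ne)).1 (hy.trans' ?_)⟩
  rw [ENNReal.ofReal_div_of_pos (by positivity)]
  gcongr
  rw [← ENNReal.ofReal_natCast]
  exact ENNReal.ofReal_le_ofReal (by linarith)

lemma IsNonnegSupersolution.smallData_of_eLpNorm_le [NeZero n]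
    (hu : IsNonnegSupersolution lam Lam U b f u) {q : ℝ} (hq : n ≤ q) (hr : 0 < r)
    (hyU : Metric.closedBall y (6 * r) ⊆ U) {K : ℝ} (hK : 0 ≤ K)
    (hb : eLpNorm b (ENNReal.ofReal q) (volume.restrict U) ≤ ENNReal.ofReal K)
    (hKη : K * (unitBallRoot n * (6 * r)) ^ (1 - n / q) ≤ η)
    (hf : eLpNorm f n (volume.restrict U) ≤ ENNReal.ofReal (η * t / r)) :
    SmallData U b f η y r t := by
  have hrestrict := Measure.restrict_mono hyU (le_refl volume)
  refine ⟨hyU, ?_, (eLpNorm_mono_measure f hrestrict).trans hf⟩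
  exact (eLpNorm_le_mul_rpow_of_subset_closedBall hq (by positivity) subset_rfl
    ((hu.continuousOn_drift.mono hyU).aestronglyMeasurable measurableSet_closedBall) hK
    ((eLpNorm_mono_measure b hrestrict).trans hb)).trans (ENNReal.ofReal_le_ofReal hKη)

theorem exists_lower_bound_on_compact [NeZero n] (hlam : 0 < lam) (hLam : lam ≤ Lam) {q : ℝ}
    (hq : n < q) {K : ℝ} (hK : 0 < K) (hU : IsOpen U) (hZ : IsCompact Z) (hZc : Convex ℝ Z)
    (hZU : Z ⊆ U) {m ν : ℝ} (hm : 0 < m) (hν : 0 < ν) :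
    ∃ c a, 0 < c ∧ 0 < a ∧ ∀ b f u : 𝔼 n → ℝ, IsNonnegSupersolution lam Lam U b f u →
      eLpNorm b (ENNReal.ofReal q) (volume.restrict U) ≤ ENNReal.ofReal K →
      eLpNorm f n (volume.restrict U) ≤ ENNReal.ofReal a →
      ENNReal.ofReal ν ≤ volume {x ∈ Z | m < u x} → ∀ x ∈ Z, c < u x := by
  obtain ⟨M, μ, η, hM, hμ, hη, hG⟩ := exists_growthProperty (n := n) hlam hLam
  obtain ⟨δ, hδ, hZδ⟩ := hZ.exists_cthickening_subset_open hU hZU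
  have hτ : 0 < 1 - n / q := sub_pos.2 ((div_lt_one ((Nat.cast_nonneg n).trans_lt hq)).2 hq)
  obtain ⟨r₆, hr₆, hr₆δ, hKη⟩ := exists_radius_mul_rpow_le (K := K) (C := unitBallRoot n) hτ hδ hη
  let r := r₆ / 6
  have hr : 0 < r := by positivity
  have h6r : 6 * r = r₆ := mul_div_cancel₀ r₆ (by norm_num)
  have hball {x} (hx : x ∈ Z) : Metric.closedBall x (6 * r) ⊆ U :=
    ((Metric.closedBall_subset_closedBall (h6r ▸ hr₆δ.le)).trans
      (Metric.closedBall_subset_cthickening hx δ)).trans hZδ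
  obtain ⟨T, hTZ, hTpig⟩ := exists_finset_closedBall_measureReal_ge hZ hr
  obtain ⟨t, ht, htdecay⟩ := hG.exists_lt_on_closedBall hM.le hμ hη.le hr hm
    (show 0 < ν / (T.card + 1) by positivity)
  obtain ⟨N, hN⟩ := exists_nat_ge (Metric.diam Z / (4 * r))
  have hc : 0 < t / M ^ N := by positivity
  have hMc : M ^ N * (t / M ^ N) = t := mul_div_cancel₀ t (by positivity)
  refine ⟨t / M ^ N, η * (t / M ^ N) / r, hc, by positivity,
    fun b f u hu hb hf hνm x hx => ?_⟩
  have hdata (x) (hx : x ∈ Z) : SmallData U b f η x r (t / M ^ N) :=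
    hu.smallData_of_eLpNorm_le hq.le hr (hball hx) hK.le hb (h6r ▸ hKη) hf
  obtain ⟨y, hyT, hyν⟩ := hTpig {x ∈ Z | m < u x} (fun x hx => hx.1) hν hνm
  have hyt := htdecay U b f u hu y
    ((hdata y (hTZ hyT)).mono hη.le (by simp) hr le_rfl hc.le
      (div_le_self ht.le (one_le_pow₀ hM.le)))
    (hyν.trans (measureReal_mono (fun x hx => ⟨hx.2, hx.1.2⟩)
      (measure_ne_top_of_subset (fun x hx => hx.1) measure_closedBall_lt_top.ne)))
  refine hG.lt_on_closedBall_of_dist_le hu hM.le hμ hη.le hr hc hZc hdata (hTZ hyT) N le_rfl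
    (by rwa [hMc]) hx ?_ x (Metric.mem_closedBall_self hr.le)
  exact (Metric.dist_le_diam_of_mem hZ.isBounded (hTZ hyT) hx).trans
    ((div_le_iff₀ (by positivity)).1 hN)

end InteriorEstimate

section QuadraticBarrier

variable {n : ℕ}

/-- The boundary comparison function: the linear profile `k (x_N - s)`, lowered by a paraboloid
about `y` and by a concave function of `x_N`. For a suitable weight `B` the latter makes up for the
second derivatives of the paraboloid. -/
noncomputable def quadraticBarrier (N : Fin n) (y : 𝔼 n) (k s κ B r : ℝ) (x : 𝔼 n) : ℝ :=
  k * (x N - s) - κ * (4 * ‖x - y‖ ^ 2 + B * (2 * r * x N - x N ^ 2))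

variable (N : Fin n) (y : 𝔼 n) (k s κ B r : ℝ)

lemma contDiff_quadraticBarrier : ContDiff ℝ 2 (quadraticBarrier N y k s κ B r) := by
  have hnorm : ContDiff ℝ 2 fun x : 𝔼 n => ‖x - y‖ ^ 2 := (contDiff_id.sub contDiff_const).norm_sq ℝ
  unfold quadraticBarrier
  fun_prop

lemma hasGradientAt_quadraticBarrier (x : 𝔼 n) :
    HasGradientAt (quadraticBarrier N y k s κ B r)
      ((k - 2 * κ * B * (r - x N)) • EuclideanSpace.single N 1 - (8 * κ) • (x - y)) x := by
  rw [hasGradientAt_iff_hasFDerivAt]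
  have hnorm := ((hasFDerivAt_id x).sub_const y).norm_sq
  have hcoord : HasFDerivAt (fun x : 𝔼 n => x N) _ x :=
    (EuclideanSpace.proj (𝕜 := ℝ) N).hasFDerivAt
  refine (((hcoord.sub_const s).const_mul k).sub (((hnorm.const_mul 4).add
    (((hcoord.const_mul (2 * r)).sub (hcoord.pow 2)).const_mul B)).const_mul κ)).congr_fderiv ?_
  ext v
  simp [EuclideanSpace.inner_single_left]
  ring

lemma hess_quadraticBarrier (x : 𝔼 n) :
    hess n (quadraticBarrier N y k s κ B r) x =
      (2 * κ * B) • Matrix.vecMulVec (Pi.single N 1) (Pi.single N 1) -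
        (8 * κ) • (1 : Matrix (Fin n) (Fin n) ℝ) := by
  have hcoord : HasFDerivAt (fun x : 𝔼 n => x N) _ x :=
    (EuclideanSpace.proj (𝕜 := ℝ) N).hasFDerivAt
  ext i j
  rw [hess_apply_of_hasGradientAt (.of_forall (hasGradientAt_quadraticBarrier N y k s κ B r))
    (((((hcoord.const_sub r).const_mul (2 * κ * B)).const_sub k).smul_const
      (EuclideanSpace.single N (1 : ℝ))).sub
        (((hasFDerivAt_id x).sub_const y).const_smul (8 * κ)))]
  by_cases hi : i = N <;>
    simp [Matrix.vecMulVec_apply, Matrix.one_apply, Pi.single_apply, hi, eq_comm (a := N),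
      eq_comm (a := i)]

variable {y k s κ B r}

lemma trace_mul_hess_quadraticBarrier_nonneg {lam Lam : ℝ} {A : Matrix (Fin n) (Fin n) ℝ}
    (hA : IsElliptic lam Lam A) (hκ : 0 ≤ κ) (hB : 0 ≤ B) (hBlam : B * lam = 4 * (n * Lam))
    (x : 𝔼 n) : 0 ≤ (A * hess n (quadraticBarrier N y k s κ B r) x).trace := by
  rw [hess_quadraticBarrier]
  refine (hA.le_trace_mul (by positivity) (by positivity) _).trans' (le_of_eq ?_)
  rw [single_one_dotProduct, Pi.single_eq_same]
  linear_combination -2 * κ * hBlam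

lemma norm_fderiv_quadraticBarrier_le (hk : 0 ≤ k) (hκ : 0 ≤ κ) (hB : 0 ≤ B) {x : 𝔼 n}
    (hxy : ‖x - y‖ ≤ r / 2) (hx0 : 0 ≤ x N) (hxr : x N ≤ r) :
    ‖fderiv ℝ (quadraticBarrier N y k s κ B r) x‖ ≤ k + κ * r * (4 + 2 * B) := by
  rw [(hasGradientAt_quadraticBarrier N y k s κ B r x).hasFDerivAt.fderiv,
    LinearIsometryEquiv.norm_map]
  calc ‖(k - 2 * κ * B * (r - x N)) • EuclideanSpace.single N 1 - (8 * κ) • (x - y)‖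
      ≤ |k - 2 * κ * B * (r - x N)| + 8 * κ * ‖x - y‖ := by
        refine (norm_sub_le _ _).trans_eq ?_
        rw [norm_smul, norm_smul, PiLp.norm_single, norm_one, mul_one,
          Real.norm_eq_abs, Real.norm_of_nonneg (show 0 ≤ 8 * κ by positivity)]
    _ ≤ (k + 2 * κ * B * r) + 8 * κ * (r / 2) := by
        gcongr
        have hslope : 0 ≤ 2 * κ * B * (r - x N) := mul_nonneg (by positivity) (by linarith)
        have hslope' : 0 ≤ 2 * κ * B * x N := by positivity
        exact abs_le.2 ⟨by linarith, by linarith⟩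
    _ = k + κ * r * (4 + 2 * B) := by ring

lemma le_quadraticBarrier_self {ε : ℝ} (hk : 0 ≤ k) (hε : 0 ≤ ε) (hB : 0 ≤ B) (hr : 0 < r)
    (x : 𝔼 n) :
    k * ((1 - 2 * B * ε) * x N - s) ≤ quadraticBarrier N x k s (k * ε / r) B r x := by
  have hsq : 0 ≤ k * ε / r * (B * x N ^ 2) := by positivity
  have hlin : k * ε / r * (B * (2 * r * x N)) = k * (2 * B * ε * x N) := by field_simp
  rw [quadraticBarrier, sub_self, norm_zero]
  linarith

end QuadraticBarrier

section BoundaryEstimate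

variable {n : ℕ}

/-- The closed ball of radius `r` about `y`, intersected with the open half-space `0 < x_N`. -/
def upperHalfBall (N : Fin n) (y : 𝔼 n) (r : ℝ) : Set (𝔼 n) :=
  {x ∈ Metric.closedBall y r | 0 < x N}

variable {N : Fin n} {y : 𝔼 n} {lam Lam B k r s ε η θ δ : ℝ} {U : Set (𝔼 n)} {b f u : 𝔼 n → ℝ}

lemma upperHalfBall_mono {r' : ℝ} (hrr' : r ≤ r') : upperHalfBall N y r ⊆ upperHalfBall N y r' :=
  fun _ hx => ⟨Metric.closedBall_subset_closedBall hrr' hx.1, hx.2⟩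

lemma apply_le_of_mem_upperHalfBall (hy : y N = 0) {x : 𝔼 n} (hx : x ∈ upperHalfBall N y r) :
    x N ≤ r := by
  have hcoord := PiLp.norm_apply_le (x - y) N
  rw [PiLp.sub_apply, hy, sub_zero, Real.norm_of_nonneg hx.2.le, ← dist_eq_norm] at hcoord
  exact hcoord.trans hx.1

lemma quadraticBarrier_le_of_notMem_interior (hk : 0 ≤ k) (hε : 0 ≤ ε) (hB : 0 ≤ B) (hr : 0 < r)
    (hs : 0 ≤ s) {x z : 𝔼 n} (hx : x ∈ Metric.closedBall z (r / 2) ∩ {x | s ≤ x N})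
    (hxr : x N ≤ r) (hxint : x ∉ interior (Metric.closedBall z (r / 2) ∩ {x | s ≤ x N})) :
    quadraticBarrier N z k s (k * ε / r) B r x ≤ max 0 (k * (x N - ε * r)) := by
  have hxs : s ≤ x N := hx.2
  have hconcave : 0 ≤ 2 * r * x N - x N ^ 2 := by nlinarith
  have hopen : Metric.ball z (r / 2) ∩ {x | s < x N} ⊆
      interior (Metric.closedBall z (r / 2) ∩ {x | s ≤ x N}) :=
    interior_maximal (fun w hw => ⟨Metric.ball_subset_closedBall hw.1, (show s < w N from hw.2).le⟩)
      (Metric.isOpen_ball.inter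
        (isOpen_lt continuous_const (EuclideanSpace.proj (𝕜 := ℝ) N).continuous))
  unfold quadraticBarrier
  by_cases hxz : dist x z < r / 2
  · have hxs' : x N = s := hxs.antisymm' (not_lt.1 fun hlt => hxint (hopen ⟨hxz, hlt⟩))
    refine le_max_of_le_left ?_
    rw [hxs', sub_self, mul_zero, zero_sub, neg_nonpos]
    rw [hxs'] at hconcave
    positivity
  · have hxz' : ‖x - z‖ = r / 2 := by
      rw [← dist_eq_norm]
      exact hx.1.antisymm (not_lt.1 hxz)
    refine le_max_of_le_right ?_
    have hpar : k * ε / r * (4 * ‖x - z‖ ^ 2) = k * (ε * r) := by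
      rw [hxz']
      field_simp
      ring
    rw [mul_add, hpar]
    have hloss : 0 ≤ k * ε / r * (B * (2 * r * x N - x N ^ 2)) := by positivity
    have hshift : 0 ≤ k * s := by positivity
    linarith

/-- In the half-ball of radius `r` about `y`, which lies in `U`, the function `u` is above the
linear profile `k (x_N - ε r)`, while the drift and the right-hand side are of order `η` relative to
the slope `k`. -/
structure BoundaryProfile (U : Set (𝔼 n)) (b f u : 𝔼 n → ℝ) (η k ε : ℝ) (N : Fin n) (y : 𝔼 n)
    (r : ℝ) : Prop where
  subset : upperHalfBall N y r ⊆ U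
  drift_le : eLpNorm b n (volume.restrict (upperHalfBall N y r)) ≤ ENNReal.ofReal η
  rhs_le : eLpNorm f n (volume.restrict (upperHalfBall N y r)) ≤ ENNReal.ofReal (k * η)
  profile_le : ∀ x ∈ upperHalfBall N y r, k * (x N - ε * r) ≤ u x

namespace BoundaryProfile

lemma le_on_upperHalfBall_div_two_sub [NeZero n] (hD : BoundaryProfile U b f u η k ε N y r)
    (hu : IsNonnegSupersolution lam Lam U b f u) (hlam : 0 < lam) (hLam : lam ≤ Lam) (hB : 0 ≤ B)
    (hBlam : B * lam = 4 * (n * Lam)) (hη : 0 ≤ η) (hδ : 0 ≤ δ) (hδ1 : δ ≤ 1)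
    (hηδ : η * (7 + 2 * B) < lam * unitBallRoot n * δ) (hy : y N = 0) (hr : 0 < r) (hk : 0 < k)
    (hε : 0 ≤ ε) (hε1 : ε ≤ 1) {x : 𝔼 n} (hx : x ∈ upperHalfBall N y (r / 2)) (hs : 0 < s)
    (hsx : s ≤ x N) : k * ((1 - 2 * B * ε) * x N - s - δ * r) ≤ u x := by
  by_contra! hlt
  let Z := Metric.closedBall x (r / 2) ∩ {w | s ≤ w N}
  have hZ : IsCompact Z := (isCompact_closedBall x (r / 2)).inter_right
    (isClosed_le continuous_const (EuclideanSpace.proj (𝕜 := ℝ) N).continuous)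
  have hZH : Z ⊆ upperHalfBall N y r := fun w hw =>
    ⟨Metric.closedBall_subset_closedBall' (by linarith [Metric.mem_closedBall.1 hx.1]) hw.1,
      hs.trans_le hw.2⟩
  have hZr {w} (hw : w ∈ Z) : w N ≤ r := apply_le_of_mem_upperHalfBall hy (hZH hw)
  have hκ : 0 ≤ k * ε / r := by positivity
  have hgrad (w) (hw : w ∈ Z) :
      ‖fderiv ℝ (quadraticBarrier N x k s (k * ε / r) B r) w‖ ≤ k * (5 + 2 * B) := by
    calc ‖fderiv ℝ (quadraticBarrier N x k s (k * ε / r) B r) w‖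
        ≤ k + k * ε / r * r * (4 + 2 * B) := norm_fderiv_quadraticBarrier_le N hk.le hκ hB
          (mem_closedBall_iff_norm.1 hw.1) (hs.le.trans hw.2) (hZr hw)
      _ ≤ k + k * 1 * (4 + 2 * B) := by
        rw [div_mul_cancel₀ _ hr.ne']
        gcongr
      _ = k * (5 + 2 * B) := by ring
  have hcontact : u x + k * δ * r ≤ quadraticBarrier N x k s (k * ε / r) B r x := by
    linarith [le_quadraticBarrier_self N (s := s) hk.le hε hB hr x]
  have habp := hu.abp hlam hLam hZ (hZH.trans hD.subset) hr
    (fun v hv w hw => by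
      linarith [dist_triangle_right v w x, Metric.mem_closedBall.1 hv.1,
        Metric.mem_closedBall.1 hw.1])
    (contDiff_quadraticBarrier N x k s (k * ε / r) B r) hgrad MeasurableSet.empty le_rfl
    (fun w _ A hA => by
      simpa using trace_mul_hess_quadraticBarrier_nonneg N hA hκ hB hBlam w)
    (fun w hw hwint => (quadraticBarrier_le_of_notMem_interior hk.le hε hB hr hs.le hw (hZr hw)
      hwint).trans (max_le (hu.nonneg w (hD.subset (hZH hw))) (hD.profile_le w (hZH hw))))
    (by positivity) ⟨Metric.mem_closedBall_self (by positivity), hsx⟩ hcontact hη (by positivity)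
    le_rfl
    ((eLpNorm_mono_measure b (Measure.restrict_mono hZH le_rfl)).trans hD.drift_le)
    ((eLpNorm_mono_measure f (Measure.restrict_mono hZH le_rfl)).trans hD.rhs_le)
    (by simp)
  rw [mul_div_cancel_right₀ _ hr.ne', mul_zero, add_zero] at habp
  refine habp.not_gt ?_
  calc (k * δ + k * (5 + 2 * B)) * η + k * η
      ≤ (k * 1 + k * (5 + 2 * B)) * η + k * η := by gcongr
    _ = k * (η * (7 + 2 * B)) := by ring
    _ < k * (lam * unitBallRoot n * δ) := by gcongr
    _ = lam * (unitBallRoot n * (k * δ)) := by ring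

lemma le_on_upperHalfBall_div_two [NeZero n] (hD : BoundaryProfile U b f u η k ε N y r)
    (hu : IsNonnegSupersolution lam Lam U b f u) (hlam : 0 < lam) (hLam : lam ≤ Lam) (hB : 0 ≤ B)
    (hBlam : B * lam = 4 * (n * Lam)) (hη : 0 ≤ η) (hδ : 0 ≤ δ) (hδ1 : δ ≤ 1)
    (hηδ : η * (7 + 2 * B) < lam * unitBallRoot n * δ) (hy : y N = 0) (hr : 0 < r) (hk : 0 < k)
    (hε : 0 ≤ ε) (hε1 : ε ≤ 1) :
    ∀ x ∈ upperHalfBall N y (r / 2), k * ((1 - 2 * B * ε) * x N - δ * r) ≤ u x := by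
  intro x hx
  have hlim : Filter.Tendsto (fun s => k * ((1 - 2 * B * ε) * x N - s - δ * r))
      (nhdsWithin 0 (Set.Ioi 0)) (nhds (k * ((1 - 2 * B * ε) * x N - 0 - δ * r))) :=
    (Continuous.tendsto (by fun_prop) 0).mono_left nhdsWithin_le_nhds
  rw [sub_zero] at hlim
  refine le_of_tendsto hlim ?_
  filter_upwards [Ioc_mem_nhdsGT hx.2] with s hs
  exact hD.le_on_upperHalfBall_div_two_sub hu hlam hLam hB hBlam hη hδ hδ1 hηδ hy hr hk hε hε1 hx
    hs.1 hs.2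

end BoundaryProfile

lemma IsNonnegSupersolution.le_on_upperHalfBall_div_two_pow [NeZero n]
    (hu : IsNonnegSupersolution lam Lam U b f u) (hlam : 0 < lam) (hLam : lam ≤ Lam) (hB : 0 ≤ B)
    (hBlam : B * lam = 4 * (n * Lam)) (hη : 0 ≤ η) (hθ : 0 < θ) (hθ1 : θ < 1) (hε : 0 ≤ ε)
    (hε1 : ε ≤ 1) (hBε : 2 * B * ε = (1 - θ) / 4)
    (hηε : η * (7 + 2 * B) < lam * unitBallRoot n * (ε * θ / 4)) (hy : y N = 0) (hr : 0 < r)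
    (hU : upperHalfBall N y r ⊆ U) (hk : 0 < k)
    (hb : ∀ j : ℕ, eLpNorm b n (volume.restrict (upperHalfBall N y (r / 2 ^ j))) ≤
      ENNReal.ofReal (η * θ ^ j))
    (hf : ∀ j : ℕ, eLpNorm f n (volume.restrict (upperHalfBall N y (r / 2 ^ j))) ≤
      ENNReal.ofReal (k / 2 * (η * θ ^ j)))
    (hku : ∀ x ∈ upperHalfBall N y r, k * (x N - ε * r) ≤ u x) (j : ℕ) :
    ∀ x ∈ upperHalfBall N y (r / 2 ^ j),
      k * (3 + θ ^ j) / 4 * (x N - ε * θ ^ j * (r / 2 ^ j)) ≤ u x := by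
  induction j with
  | zero => simpa [show (3 : ℝ) + 1 = 4 by norm_num] using hku
  | succ j ih =>
    have hθj : θ ^ j ≤ 1 := pow_le_one₀ hθ.le hθ1.le
    have hεj : ε * θ ^ j ≤ 1 := mul_le_one₀ hε1 (by positivity) hθj
    have hkj : k / 2 ≤ k * (3 + θ ^ j) / 4 := by nlinarith [mul_pos hk (pow_pos hθ j)]
    have hD : BoundaryProfile U b f u (η * θ ^ j) (k * (3 + θ ^ j) / 4) (ε * θ ^ j) N y
        (r / 2 ^ j) :=
      { subset := (upperHalfBall_mono (div_le_self hr.le (one_le_pow₀ one_le_two))).trans hU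
        drift_le := hb j
        rhs_le := (hf j).trans (ENNReal.ofReal_le_ofReal (by gcongr))
        profile_le := ih }
    have hstep := hD.le_on_upperHalfBall_div_two hu hlam hLam hB hBlam (by positivity)
      (δ := ε * θ ^ j * θ / 4) (by positivity) (by nlinarith)
      (by nlinarith [mul_lt_mul_of_pos_right hηε (pow_pos hθ j)]) hy (by positivity) (by positivity)
      (by positivity) hεj
    intro x hx
    rw [pow_succ, ← div_div] at hx
    refine (hstep x hx).trans' ?_
    have hslope : 3 + θ ^ j * θ ≤ (3 + θ ^ j) * (1 - 2 * B * (ε * θ ^ j)) := by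
      have hBεj : 2 * B * (ε * θ ^ j) = (1 - θ) / 4 * θ ^ j := by rw [← hBε]; ring
      rw [hBεj]
      nlinarith [mul_nonneg (mul_nonneg (sub_nonneg.2 hθ1.le) (pow_pos hθ j).le)
        (sub_nonneg.2 hθj)]
    have herror : 3 + θ ^ j ≤ (3 + θ ^ j * θ) * 2 := by nlinarith [mul_pos (pow_pos hθ j) hθ]
    have hxN : 0 < x N := hx.2
    calc k * (3 + θ ^ (j + 1)) / 4 * (x N - ε * θ ^ (j + 1) * (r / 2 ^ (j + 1)))
        = k / 4 * ((3 + θ ^ j * θ) * x N) -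
            k / 16 * (ε * θ ^ j * θ * (r / 2 ^ j)) * ((3 + θ ^ j * θ) * 2) := by
          rw [pow_succ, pow_succ]
          ring
      _ ≤ k / 4 * ((3 + θ ^ j) * (1 - 2 * B * (ε * θ ^ j)) * x N) -
            k / 16 * (ε * θ ^ j * θ * (r / 2 ^ j)) * (3 + θ ^ j) := by gcongr
      _ = k * (3 + θ ^ j) / 4 *
            ((1 - 2 * B * (ε * θ ^ j)) * x N - ε * θ ^ j * θ / 4 * (r / 2 ^ j)) := by ring

lemma mul_le_apply_add_single (hθ : 0 ≤ θ) (hθ1 : θ ≤ 1) (hε1 : ε ≤ 1 / 4) (hy : y N = 0)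
    (hk : 0 ≤ k)
    (hku : ∀ j : ℕ, ∀ x ∈ upperHalfBall N y (r / 2 ^ j),
      k * (3 + θ ^ j) / 4 * (x N - ε * θ ^ j * (r / 2 ^ j)) ≤ u x) {t : ℝ} (ht : 0 < t)
    (htr : t ≤ r) : k / 4 * t ≤ u (y + EuclideanSpace.single N t) := by
  obtain ⟨j, hj, hj'⟩ := exists_nat_pow_near ((one_le_div ht).2 htr) one_lt_two
  rw [le_div_iff₀' ht, ← le_div_iff₀ (by positivity)] at hj
  rw [div_lt_iff₀' ht, pow_succ, ← mul_assoc, mul_right_comm, ← div_lt_iff₀ (by positivity)] at hj'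
  have hcoord : (y + EuclideanSpace.single N t) N = t := by simp [hy]
  have hmem : y + EuclideanSpace.single N t ∈ upperHalfBall N y (r / 2 ^ j) := by
    refine ⟨?_, hcoord.symm ▸ ht⟩
    rwa [mem_closedBall_iff_norm, add_sub_cancel_left, PiLp.norm_single, Real.norm_of_nonneg ht.le]
  have hθj : θ ^ j ≤ 1 := pow_le_one₀ hθ hθ1
  refine (hku j _ hmem).trans' ?_
  rw [hcoord]
  have hprofile : t / 2 ≤ t - ε * θ ^ j * (r / 2 ^ j) := by
    have : ε * θ ^ j * (r / 2 ^ j) ≤ 1 / 4 * 1 * (t * 2) := by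
      have := ht.le.trans hj
      gcongr
    linarith
  calc k / 4 * t ≤ k * (3 + 0) / 4 * (t / 2) := by nlinarith
    _ ≤ k * (3 + θ ^ j) / 4 * (t - ε * θ ^ j * (r / 2 ^ j)) := by
      gcongr
      positivity

lemma eLpNorm_upperHalfBall_div_two_pow_le [NeZero n] {q : ℝ} (hq : n ≤ q) (hU : IsOpen U)
    (hr : 0 < r) (hrU : upperHalfBall N y r ⊆ U) {g : 𝔼 n → ℝ} (hg : ContinuousOn g U) {a : ℝ}
    (ha : 0 ≤ a) (hga : eLpNorm g (ENNReal.ofReal q) (volume.restrict U) ≤ ENNReal.ofReal a)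
    (j : ℕ) : eLpNorm g n (volume.restrict (upperHalfBall N y (r / 2 ^ j))) ≤
      ENNReal.ofReal (a * (unitBallRoot n * r) ^ (1 - n / q) * ((1 / 2) ^ (1 - n / q)) ^ j) := by
  have hroot := unitBallRoot_pos (n := n)
  have hsub : upperHalfBall N y (r / 2 ^ j) ⊆ U :=
    (upperHalfBall_mono (div_le_self hr.le (one_le_pow₀ one_le_two))).trans hrU
  have hmono := Measure.restrict_mono hsub (le_refl volume)
  refine (eLpNorm_le_mul_rpow_of_subset_closedBall hq (by positivity) (fun x hx => hx.1)
    ((hg.aestronglyMeasurable hU.measurableSet).mono_measure hmono) ha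
    ((eLpNorm_mono_measure g hmono).trans hga)).trans_eq ?_
  rw [Real.rpow_pow_comm (by norm_num), mul_assoc a,
    ← Real.mul_rpow (by positivity) (by positivity), one_div_pow, mul_one_div, mul_div_assoc]

theorem exists_boundary_lower_bound [NeZero n] (hlam : 0 < lam) (hLam : lam ≤ Lam) {q : ℝ}
    (hq : n < q) {K : ℝ} (hK : 0 < K) {R : ℝ} (hR : 0 < R) :
    ∃ ε r, 0 < ε ∧ 0 < r ∧ r < R ∧ ∀ k, 0 < k → ∃ a, 0 < a ∧
      ∀ (U : Set (𝔼 n)) (b f u : 𝔼 n → ℝ), IsNonnegSupersolution lam Lam U b f u →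
        eLpNorm b (ENNReal.ofReal q) (volume.restrict U) ≤ ENNReal.ofReal K →
        eLpNorm f (ENNReal.ofReal q) (volume.restrict U) ≤ ENNReal.ofReal a →
        ∀ (N : Fin n) (y : 𝔼 n), y N = 0 → upperHalfBall N y r ⊆ U →
          (∀ x ∈ upperHalfBall N y r, k * (x N - ε * r) ≤ u x) →
          ∀ t, 0 < t → t ≤ r → k / 4 * t ≤ u (y + EuclideanSpace.single N t) := by
  have hroot := unitBallRoot_pos (n := n)
  have hn : (1 : ℝ) ≤ n := Nat.one_le_cast.2 NeZero.one_le
  have hτ : 0 < 1 - n / q := sub_pos.2 ((div_lt_one (by linarith)).2 hq)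
  let θ : ℝ := (1 / 2) ^ (1 - n / q)
  have hθ : 0 < θ := by positivity
  have hθ1 : θ < 1 := Real.rpow_lt_one (by norm_num) (by norm_num) hτ
  have hLam0 : 0 < Lam := hlam.trans_le hLam
  let B := 4 * (n * Lam) / lam
  have hB : 1 ≤ B := (one_le_div hlam).2 (by nlinarith)
  let ε := (1 - θ) / (8 * B)
  have hε : 0 < ε := div_pos (sub_pos.2 hθ1) (by positivity)
  have hBε : 2 * B * ε = (1 - θ) / 4 := by
    simp only [ε]
    field_simp
    ring
  have hε1 : ε ≤ 1 / 4 := by nlinarith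
  let η := lam * unitBallRoot n * (ε * θ / 4) / (8 + 2 * B)
  have hη : 0 < η := by positivity
  have hηε : η * (7 + 2 * B) < lam * unitBallRoot n * (ε * θ / 4) := by
    rw [← lt_div_iff₀ (by positivity)]
    exact div_lt_div_of_pos_left (by positivity) (by positivity) (by linarith)
  obtain ⟨r, hr, hrR, hrη⟩ := exists_radius_mul_rpow_le (K := K) (C := unitBallRoot n) hτ hR hη
  refine ⟨ε, r, hε, hr, hrR, fun k hk => ⟨k / 2 * K, by positivity, ?_⟩⟩
  intro U b f u hu hb hf N y hy hrU hku t ht htr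
  refine mul_le_apply_add_single hθ.le hθ1.le hε1 hy hk.le
    (hu.le_on_upperHalfBall_div_two_pow hlam hLam (by positivity) (div_mul_cancel₀ _ hlam.ne')
      hη.le hθ hθ1 hε.le (by linarith) hBε hηε hy hr hrU hk (fun j => ?_) (fun j => ?_) hku) ht htr
  · refine (eLpNorm_upperHalfBall_div_two_pow_le hq.le hu.isOpen hr hrU hu.continuousOn_drift hK.le
      hb j).trans (ENNReal.ofReal_le_ofReal ?_)
    gcongr
  · refine (eLpNorm_upperHalfBall_div_two_pow_le hq.le hu.isOpen hr hrU hu.continuousOn_rhs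
      (by positivity) hf j).trans (ENNReal.ofReal_le_ofReal ?_)
    rw [mul_assoc (k / 2), mul_assoc (k / 2)]
    gcongr

end BoundaryEstimate

section BoxSet

variable {n : ℕ} {N : Fin n} {I J : Set ℝ}

/-- The points of `ℝⁿ` with `N`-th coordinate in `J` and all the other coordinates in `I`. -/
def boxSet (N : Fin n) (I J : Set ℝ) : Set (𝔼 n) :=
  {x | x N ∈ J ∧ ∀ i ≠ N, x i ∈ I}

lemma boxSet_mono {I' J' : Set ℝ} (hI : I ⊆ I') (hJ : J ⊆ J') : boxSet N I J ⊆ boxSet N I' J' :=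
  fun _ hx => ⟨hJ hx.1, fun i hi => hI (hx.2 i hi)⟩

lemma boxSet_eq_preimage : (boxSet N I J : Set (𝔼 n)) =
    WithLp.ofLp ⁻¹' Set.univ.pi (Function.update (fun _ => I) N J) := by
  ext x
  rw [Set.mem_preimage, Set.mem_univ_pi,
    Function.forall_update_iff (fun _ => I) fun i (s : Set ℝ) => x i ∈ s]
  rfl

lemma isOpen_boxSet (hI : IsOpen I) (hJ : IsOpen J) : IsOpen (boxSet N I J) := by
  rw [boxSet_eq_preimage]
  refine (isOpen_set_pi Set.finite_univ fun i _ => ?_).preimage (PiLp.continuous_ofLp 2 _)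
  exact Function.forall_update_iff _ (fun _ s => IsOpen s) |>.2 ⟨hJ, fun _ _ => hI⟩ i

lemma isCompact_boxSet (hI : IsCompact I) (hJ : IsCompact J) : IsCompact (boxSet N I J) := by
  rw [boxSet_eq_preimage]
  refine (PiLp.homeomorph 2 fun _ : Fin n => ℝ).isCompact_preimage.2 (isCompact_univ_pi fun i => ?_)
  exact Function.forall_update_iff _ (fun _ s => IsCompact s) |>.2 ⟨hJ, fun _ _ => hI⟩ i

lemma convex_boxSet (hI : Convex ℝ I) (hJ : Convex ℝ J) : Convex ℝ (boxSet N I J) :=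
  fun _ hx _ hy _ _ ha hb hab =>
    ⟨hJ hx.1 hy.1 ha hb hab, fun i hi => hI (hx.2 i hi) (hy.2 i hi) ha hb hab⟩

lemma volume_boxSet (hI : MeasurableSet I) (hJ : MeasurableSet J) :
    volume (boxSet N I J) = volume J * volume I ^ (n - 1) := by
  have hmeas : ∀ i, MeasurableSet (Function.update (fun _ => I) N J i) :=
    Function.forall_update_iff _ (fun _ s => MeasurableSet s) |>.2 ⟨hJ, fun _ _ => hI⟩
  rw [boxSet_eq_preimage, (PiLp.volume_preserving_ofLp (Fin n)).measure_preimage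
    (MeasurableSet.univ_pi hmeas).nullMeasurableSet, volume_pi_pi,
    Fintype.prod_eq_mul_prod_compl N, Function.update_self,
    Finset.prod_congr rfl fun i hi => by
      rw [Function.update_of_ne (Finset.notMem_singleton.1 (Finset.mem_compl.1 hi))],
    Finset.prod_const, Finset.card_compl, Finset.card_singleton, Fintype.card_fin]

end BoxSet

section Cubes

variable {n : ℕ} {lam Lam p q K δ ν : ℝ}

/-- The index of the last coordinate, the one singled out by `lastC`. -/
abbrev lastIndex (hn : 1 ≤ n) : Fin n := ⟨n - 1, by omega⟩

lemma LpNormE_eq_eLpNorm (hp : 0 < p) (g : 𝔼 n → ℝ) (E : Set (𝔼 n)) :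
    LpNormE n p g E = eLpNorm g (ENNReal.ofReal p) (volume.restrict E) := by
  rw [eLpNorm_eq_lintegral_rpow_enorm_toReal (by simpa) ENNReal.ofReal_ne_top,
    ENNReal.toReal_ofReal hp.le, LpNormE]
  simp only [Real.enorm_eq_ofReal_abs, ENNReal.ofReal_rpow_of_nonneg (abs_nonneg _) hp.le]

lemma cubeQ_eq_boxSet (hn : 1 ≤ n) (ρ : ℝ) :
    cubeQ n hn ρ = boxSet (lastIndex hn) (Set.Ioo (-(ρ / 2)) (ρ / 2)) (Set.Ioo 0 ρ) := by
  ext x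
  simp only [cubeQ, boxSet, lastC, Set.mem_ofPred_eq, Set.mem_Ioo, abs_lt, ne_eq, Fin.ext_iff]
  exact and_comm

lemma isOpen_cubeQ (hn : 1 ≤ n) (ρ : ℝ) : IsOpen (cubeQ n hn ρ) :=
  cubeQ_eq_boxSet hn ρ ▸ isOpen_boxSet isOpen_Ioo isOpen_Ioo

lemma volume_cubeQ_ne_top (hn : 1 ≤ n) (ρ : ℝ) : volume (cubeQ n hn ρ) ≠ ∞ := by
  rw [cubeQ_eq_boxSet, volume_boxSet measurableSet_Ioo measurableSet_Ioo, Real.volume_Ioo,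
    Real.volume_Ioo]
  finiteness

/-- The part of the cube `Q₂` at positive distance from its boundary on which the interior estimate
is applied. -/
def innerBox (hn : 1 ≤ n) (δ : ℝ) : Set (𝔼 n) :=
  boxSet (lastIndex hn) (Set.Icc (-(3 / 4)) (3 / 4)) (Set.Icc δ (5 / 4))

lemma innerBox_subset_cubeQ (hn : 1 ≤ n) (hδ : 0 < δ) : innerBox hn δ ⊆ cubeQ n hn 2 := by
  rw [cubeQ_eq_boxSet]
  exact boxSet_mono (Set.Icc_subset_Ioo (by norm_num) (by norm_num))
    (Set.Icc_subset_Ioo hδ (by norm_num))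

lemma mem_innerBox_of_mem_cubeQ_one {hn : 1 ≤ n} {x : 𝔼 n} (hx : x ∈ cubeQ n hn 1)
    (hδ : δ ≤ lastC n hn x) : x ∈ innerBox hn δ := by
  rw [cubeQ_eq_boxSet] at hx
  exact boxSet_mono (Set.Ioo_subset_Icc_self.trans (Set.Icc_subset_Icc (by norm_num) (by norm_num)))
    le_rfl ⟨⟨hδ, hx.1.2.le.trans (by norm_num)⟩, hx.2⟩

lemma upperHalfBall_subset_boxSet {hn : 1 ≤ n} {x : 𝔼 n} {r : ℝ} (hx : x ∈ cubeQ n hn 1)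
    (hr : r ≤ 1 / 4) :
    upperHalfBall (lastIndex hn) (x - EuclideanSpace.single (lastIndex hn) (x (lastIndex hn))) r ⊆
      boxSet (lastIndex hn) (Set.Icc (-(3 / 4)) (3 / 4)) (Set.Ioc 0 r) := by
  rw [cubeQ_eq_boxSet] at hx
  set y := x - EuclideanSpace.single (lastIndex hn) (x (lastIndex hn))
  refine fun w hw => ⟨⟨hw.2, apply_le_of_mem_upperHalfBall (by simp [y]) hw⟩, fun i hi => ?_⟩
  have hyi : y i = x i := by simp [y, hi]
  have hcoord := (PiLp.norm_apply_le (w - y) i).trans (mem_closedBall_iff_norm.1 hw.1)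
  rw [PiLp.sub_apply, hyi, Real.norm_eq_abs, abs_le] at hcoord
  obtain ⟨hxl, hxu⟩ := hx.2 i hi
  constructor <;> linarith

lemma ofReal_half_le_volume_innerBox {hn : 1 ≤ n} {u : 𝔼 n → ℝ} (hν : 0 ≤ ν) (hδν : δ ≤ ν / 2)
    (hu : ENNReal.ofReal ν ≤ volume {x ∈ cubeQ n hn 1 | lastC n hn x < u x}) :
    ENNReal.ofReal (ν / 2) ≤ volume {x ∈ innerBox hn δ | δ < u x} := by
  let S := boxSet (lastIndex hn) (Set.Ioo (-(1 / 2)) (1 / 2)) (Set.Ioc 0 δ)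
  have hS : volume S ≤ ENNReal.ofReal (ν / 2) := by
    rw [volume_boxSet measurableSet_Ioo measurableSet_Ioc, Real.volume_Ioo, Real.volume_Ioc]
    simpa [show (2 : ℝ)⁻¹ + 2⁻¹ = 1 by norm_num] using ENNReal.ofReal_le_ofReal hδν
  have hsub : {x ∈ cubeQ n hn 1 | lastC n hn x < u x} ⊆ S ∪ {x ∈ innerBox hn δ | δ < u x} := by
    rintro x ⟨hx, hxu⟩
    rcases le_or_gt (lastC n hn x) δ with hxδ | hxδ
    · rw [cubeQ_eq_boxSet] at hx
      exact .inl ⟨⟨hx.1.1, hxδ⟩, hx.2⟩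
    · exact .inr ⟨mem_innerBox_of_mem_cubeQ_one hx hxδ.le, hxδ.trans hxu⟩
  refine (ENNReal.add_le_add_iff_left (ENNReal.ofReal_ne_top (r := ν / 2))).1 ?_
  calc ENNReal.ofReal (ν / 2) + ENNReal.ofReal (ν / 2)
      = ENNReal.ofReal ν := by
        rw [← ENNReal.ofReal_add (by positivity) (by positivity), add_halves]
    _ ≤ volume S + volume {x ∈ innerBox hn δ | δ < u x} :=
        hu.trans ((measure_mono hsub).trans (measure_union_le _ _))
    _ ≤ ENNReal.ofReal (ν / 2) + volume {x ∈ innerBox hn δ | δ < u x} := by gcongr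

lemma exists_eLpNorm_le_of_eLpNorm_le {α : Type*} [MeasurableSpace α] (μ : Measure α)
    [IsFiniteMeasure μ] {p q : ℝ≥0∞} (hp : p ≠ 0) (hpq : p ≤ q) {a : ℝ} (ha : 0 < a) :
    ∃ a', 0 < a' ∧ ∀ g : α → ℝ, AEStronglyMeasurable g μ → eLpNorm g q μ ≤ ENNReal.ofReal a' →
      eLpNorm g p μ ≤ ENNReal.ofReal a := by
  set V := μ Set.univ ^ (1 / p.toReal - 1 / q.toReal)
  have hV : V ≠ ∞ := by
    refine ENNReal.rpow_ne_top_of_nonneg (sub_nonneg.2 ?_) (measure_ne_top μ _)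
    rw [one_div, one_div, ← ENNReal.toReal_inv, ← ENNReal.toReal_inv]
    exact ENNReal.toReal_mono (ENNReal.inv_ne_top.2 hp) (ENNReal.inv_le_inv.2 hpq)
  refine ⟨a / (V.toReal + 1), by positivity, fun g hg hga => ?_⟩
  calc eLpNorm g p μ ≤ eLpNorm g q μ * V := eLpNorm_le_eLpNorm_mul_rpow_measure_univ hpq hg
    _ ≤ ENNReal.ofReal (a / (V.toReal + 1)) * ENNReal.ofReal V.toReal := by
        rw [ENNReal.ofReal_toReal hV]
        gcongr
    _ = ENNReal.ofReal (a / (V.toReal + 1) * V.toReal) := (ENNReal.ofReal_mul (by positivity)).symm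
    _ ≤ ENNReal.ofReal a := ENNReal.ofReal_le_ofReal <| by
        rw [div_mul_eq_mul_div, div_le_iff₀ (by positivity)]
        nlinarith [ENNReal.toReal_nonneg (a := V)]

theorem exists_lower_bound_on_innerBox (hn : 1 ≤ n) (hlam : 0 < lam) (hLam : lam ≤ Lam)
    (hq : n < q) (hp : n ≤ p) (hK : 0 < K) (hδ : 0 < δ) (hν : 0 < ν) (hδν : δ ≤ ν / 2) :
    ∃ c a, 0 < c ∧ 0 < a ∧ ∀ b f u : 𝔼 n → ℝ,
      IsNonnegSupersolution lam Lam (cubeQ n hn 2) b f u →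
      LpNormE n q b (cubeQ n hn 2) ≤ ENNReal.ofReal K →
      LpNormE n p f (cubeQ n hn 2) ≤ ENNReal.ofReal a →
      ENNReal.ofReal ν ≤ volume {x ∈ cubeQ n hn 1 | lastC n hn x < u x} →
      ∀ x ∈ innerBox hn δ, c < u x := by
  have : NeZero n := ⟨Nat.one_le_iff_ne_zero.1 hn⟩
  have hn0 : (0 : ℝ) < n := Nat.cast_pos.2 hn
  have : IsFiniteMeasure (volume.restrict (cubeQ n hn 2)) :=
    isFiniteMeasure_restrict.2 (volume_cubeQ_ne_top hn 2)
  obtain ⟨c, a, hc, ha, hbound⟩ := exists_lower_bound_on_compact hlam hLam hq hK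
    (isOpen_cubeQ hn 2) (isCompact_boxSet isCompact_Icc isCompact_Icc)
    (convex_boxSet (convex_Icc _ _) (convex_Icc _ _)) (innerBox_subset_cubeQ hn hδ) hδ
    (half_pos hν)
  obtain ⟨a', ha', hexp⟩ := exists_eLpNorm_le_of_eLpNorm_le (volume.restrict (cubeQ n hn 2))
    (p := n) (q := ENNReal.ofReal p) (NeZero.ne _) (by rwa [← ENNReal.ofReal_natCast,
      ENNReal.ofReal_le_ofReal_iff (hn0.le.trans hp)]) ha
  refine ⟨c, a', hc, ha', fun b f u hu hb hf hν' => ?_⟩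
  rw [LpNormE_eq_eLpNorm (hn0.trans hq)] at hb
  rw [LpNormE_eq_eLpNorm (hn0.trans_le hp)] at hf
  exact hbound b f u hu hb (hexp f (hu.continuousOn_rhs.aestronglyMeasurable
    hu.isOpen.measurableSet) hf) (ofReal_half_le_volume_innerBox hν.le hδν hν')

theorem exists_linear_lower_bound_near_flat_boundary (hn : 1 ≤ n) (hlam : 0 < lam)
    (hLam : lam ≤ Lam) (hq : n < q) (hK : 0 < K) {d0 : ℝ} (hd0 : 0 < d0) :
    ∃ δ₀ r, 0 < δ₀ ∧ δ₀ ≤ r ∧ ∀ c, 0 < c → ∃ a, 0 < a ∧ ∀ b f u : 𝔼 n → ℝ,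
      IsNonnegSupersolution lam Lam (cubeQ n hn 2) b f u →
      LpNormE n q b (cubeQ n hn 2) ≤ ENNReal.ofReal K →
      LpNormE n q f {x ∈ cubeQ n hn 2 | lastC n hn x < d0} ≤ ENNReal.ofReal a →
      ∀ δ ≤ δ₀, (∀ x ∈ innerBox hn δ, c ≤ u x) →
      ∀ x ∈ cubeQ n hn 1, lastC n hn x ≤ r → c / (4 * r) * lastC n hn x ≤ u x := by
  have : NeZero n := ⟨Nat.one_le_iff_ne_zero.1 hn⟩
  have hq0 : 0 < q := (Nat.cast_nonneg n).trans_lt hq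
  obtain ⟨ε, r, hε, hr, hrR, hgrowth⟩ :=
    exists_boundary_lower_bound (n := n) hlam hLam hq hK (R := min d0 (1 / 8)) (by positivity)
  obtain ⟨hrd0, hr8⟩ := lt_min_iff.1 hrR
  refine ⟨min (ε * r) r, r, by positivity, min_le_right _ _, fun c hc => ?_⟩
  obtain ⟨a, ha, hgrowth⟩ := hgrowth (c / r) (by positivity)
  refine ⟨a, ha, fun b f u hu hb hf δ hδ hinner x hx hxr => ?_⟩
  set N := lastIndex hn
  set y := x - EuclideanSpace.single N (x N)
  have hhalf : upperHalfBall N y r ⊆ boxSet N (Set.Icc (-(3 / 4)) (3 / 4)) (Set.Ioc 0 r) :=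
    upperHalfBall_subset_boxSet hx (by linarith)
  set U := {x ∈ cubeQ n hn 2 | lastC n hn x < d0}
  have hU : IsOpen U :=
    (isOpen_cubeQ hn 2).inter (isOpen_lt (EuclideanSpace.proj (𝕜 := ℝ) N).continuous
      continuous_const)
  have hUQ : U ⊆ cubeQ n hn 2 := Set.sep_subset _ _
  have hhalfU : upperHalfBall N y r ⊆ U := fun w hw => by
    refine ⟨?_, (hhalf hw).1.2.trans_lt hrd0⟩
    rw [cubeQ_eq_boxSet]
    exact boxSet_mono (Set.Icc_subset_Ioo (by norm_num) (by norm_num))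
      (Set.Ioc_subset_Ioo_right (by linarith)) (hhalf hw)
  have hbelow : ∀ w ∈ upperHalfBall N y r, c / r * (w N - ε * r) ≤ u w := by
    intro w hw
    obtain ⟨⟨-, hwr⟩, hwI⟩ := hhalf hw
    rcases le_or_gt δ (w N) with hwδ | hwδ
    · have hwbox : w ∈ innerBox hn δ := ⟨⟨hwδ, by linarith⟩, hwI⟩
      calc c / r * (w N - ε * r) ≤ c / r * r := by gcongr; nlinarith
        _ = c := div_mul_cancel₀ c hr.ne'
        _ ≤ u w := hinner w hwbox
    · have hwε : w N - ε * r ≤ 0 := by linarith [hδ.trans (min_le_left _ _)]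
      exact (mul_nonpos_of_nonneg_of_nonpos (by positivity) hwε).trans
        (hu.nonneg w (hUQ (hhalfU hw)))
  rw [LpNormE_eq_eLpNorm hq0] at hb hf
  have hbound := hgrowth U b f u (hu.mono hU hUQ)
    ((eLpNorm_mono_measure _ (Measure.restrict_mono_set _ hUQ)).trans hb) hf N y (by simp [y])
    hhalfU hbelow (x N) hx.2.1 hxr
  rwa [sub_add_cancel, div_div, mul_comm r 4] at hbound

theorem boundary_growth_lemma_cubes_general (n : ℕ) (hn : 1 ≤ n) (lam Lam : ℝ) (hlam : 0 < lam)
    (hLam : lam ≤ Lam) (p q d0 K ν : ℝ) (hq : n < q) (hp : n ≤ p) (hd0 : 0 < d0) (hK : 0 < K)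
    (hν : 0 < ν) :
    ∃ k a : ℝ, 0 < k ∧ 0 < a ∧ ∀ b f u : 𝔼 n → ℝ,
      IsNonnegSupersolution lam Lam (cubeQ n hn 2) b f u →
      LpNormE n q b (cubeQ n hn 2) ≤ ENNReal.ofReal K →
      LpqNormQ n hn p q d0 f ≤ ENNReal.ofReal a →
      ENNReal.ofReal ν ≤ volume {x ∈ cubeQ n hn 1 | lastC n hn x < u x} →
      ∀ x ∈ cubeQ n hn 1, k * lastC n hn x < u x := by
  obtain ⟨δ₀, r, hδ₀, hδ₀r, hboundary⟩ :=
    exists_linear_lower_bound_near_flat_boundary hn hlam hLam hq hK hd0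
  have hr : 0 < r := hδ₀.trans_le hδ₀r
  obtain ⟨c, a₁, hc, ha₁, hinterior⟩ := exists_lower_bound_on_innerBox hn hlam hLam hq hp hK
    (lt_min (half_pos hν) hδ₀) hν (min_le_left _ _)
  obtain ⟨a₂, ha₂, hboundary⟩ := hboundary c hc
  refine ⟨min c (c / (8 * r)), min a₁ a₂, by positivity, by positivity,
    fun b f u hu hb hf hmeas x hx => ?_⟩
  have hfp : LpNormE n p f (cubeQ n hn 2) ≤ ENNReal.ofReal a₁ :=
    (le_self_add.trans hf).trans (ENNReal.ofReal_le_ofReal (min_le_left _ _))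
  have hfq : LpNormE n q f {x ∈ cubeQ n hn 2 | lastC n hn x < d0} ≤ ENNReal.ofReal a₂ :=
    (le_add_self.trans hf).trans (ENNReal.ofReal_le_ofReal (min_le_right _ _))
  have hinner := hinterior b f u hu hb hfp hmeas
  obtain ⟨hx0, hx1⟩ : 0 < lastC n hn x ∧ lastC n hn x < 1 := hx.2
  rcases le_or_gt (lastC n hn x) r with hxr | hxr
  · calc min c (c / (8 * r)) * lastC n hn x ≤ c / (8 * r) * lastC n hn x := by
          gcongr; exact min_le_right _ _
      _ < c / (4 * r) * lastC n hn x := by gcongr; norm_num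
      _ ≤ u x := hboundary b f u hu hb hfq _ (min_le_right _ _)
          (fun w hw => (hinner w hw).le) x hx hxr
  · have hxbox : x ∈ innerBox hn (min (ν / 2) δ₀) :=
      mem_innerBox_of_mem_cubeQ_one hx ((min_le_right _ _).trans (hδ₀r.trans hxr.le))
    calc min c (c / (8 * r)) * lastC n hn x ≤ c * 1 := by gcongr; exact min_le_left _ _
      _ = c := mul_one c
      _ < u x := hinner x hxbox

end Cubes

/-- Boundary growth lemma in cubes. -/
theorem boundary_growth_lemma_cubes
    (n : ℕ) (hn : 2 ≤ n) (lam Lam : ℝ) (hlam : 0 < lam) (hLam : lam ≤ Lam)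
    (p q d0 K ν : ℝ) (hq : (n : ℝ) < q) (hp : (n : ℝ) ≤ p) (hpq : p ≤ q)
    (hd0 : 0 < d0) (hd0' : d0 ≤ 1 / 4) (hK : 0 < K) (hν : 0 < ν) :
    ∃ k a : ℝ, 0 < k ∧ 0 < a ∧
      ∀ b f u : EuclideanSpace ℝ (Fin n) → ℝ,
        ContinuousOn b (cubeQ n (by omega) 2) →
        ContinuousOn f (cubeQ n (by omega) 2) →
        (∀ x ∈ cubeQ n (by omega : 1 ≤ n) 2, 0 ≤ b x) →
        (∀ x ∈ cubeQ n (by omega : 1 ≤ n) 2, 0 ≤ f x) →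
        LpNormE n q b (cubeQ n (by omega) 2) ≤ ENNReal.ofReal K →
        LpqNormQ n (by omega) p q d0 f ≤ ENNReal.ofReal a →
        ContDiffOn ℝ 2 u (cubeQ n (by omega) 2) →
        (∀ x ∈ cubeQ n (by omega : 1 ≤ n) 2, 0 ≤ u x) →
        (∀ x ∈ cubeQ n (by omega : 1 ≤ n) 2,
          pucciMinus n lam Lam (hess n u x) - b x * gradNorm n u x ≤ f x) →
        ENNReal.ofReal ν
            ≤ volume {x ∈ cubeQ n (by omega : 1 ≤ n) 1 | lastC n (by omega) x < u x} →
        ∀ x ∈ cubeQ n (by omega : 1 ≤ n) 1, k * lastC n (by omega) x < u x := by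
  obtain ⟨k, a, hk, ha, hgrowth⟩ := boundary_growth_lemma_cubes_general n (one_le_two.trans hn)
    lam Lam hlam hLam p q d0 K ν hq hp hd0 hK hν
  exact ⟨k, a, hk, ha, fun b f u hb hf hb0 hf0 hbK hfa hu hu0 hsup =>
    hgrowth b f u ⟨isOpen_cubeQ _ _, hb, hf, hb0, hf0, hu, hu0, hsup⟩ hbK hfa⟩
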